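/- arXiv:1109.5526 — 2 statements merged into one kernel-verified Lean document; each statement's English description precedes it below -/
import Mathlib

section
/- There exists a constant c : ℕ such that for every n : ℕ and every code e with 2·|e| + c·(Nat.size n) ≤ n: if eval e 0 is defined, then evaln T'_n e 0 = some ((eval e 0).get) (every program of length at most n/2 - O(log n) that does not terminate within T'_n steps never terminates). -/
/-!
Fix a large `n` and choose `s` minimal such that codes of length about `2 * s` can be told apart in
`2 ^ n` ways. Then at every time bound the codes of length `2 * s` miss some `x < 2 ^ n`
(`exists_evaln_ne`). So if a code `h` of length `s` can find a time `t` by which all halting codes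
of length `n / 2` have halted, and output an `x < 2 ^ n` not produced within time `t` by codes of
length `2 * s`, then `K x ≤ s` while `Kt t x > 2 * s`, which forces `t ≤ Tn' n`. To find `t`, the
code `h` needs to know the number of halting codes of length `n / 2`, which is about `n / 2` bits
of information. The difficulty is that the code numbering is far from optimal as a description
system: it is not clear how many bits a code of length `s` can hold in a usable form. Instead of
estimating this number, one compares codes of different lengths with each other.

*Upper bound on the capacity.* A finite set of codes is sequentially separable if adaptive queries,
each of them defined on all remaining candidates, identify its members; `capacity X` is the largest
size of such a set among the codes with number below `X`. Answers of `pair a b`, `comp a b` and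
`prec a b` are determined by answers of `a` and `b`, and `encode (pair a b)` is about
`4 * max (encode a) (encode b) ^ 2`, so `capacity (4 * V ^ 2 + 3)` is at most `capacity V ^ 2` up
to a logarithmic factor. Hence codes of length `s` can be told apart in about `n / 2` bits, and
codes `k` constructors further down, below `level k s`, in about `n / 2 ^ (k + 1)` bits.

*Lower bound on the usable capacity.* `Carries X m` says that codes below `X` can compute any
target with `m` bits of information and small advice. Composition doubles the carried information.
If `2 ^ ℓ` codes below `X` are separable, a strategy identifying them can be found by search and
run inside a primitive recursion, by a code `runner` with five more constructors. One subcode of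
`runner` is the separable one and holds `ℓ` bits; the five others, one on each level, carry `m`,
`2 * m`, `4 * m`, `8 * m` and `16 * m` bits. At that level `ℓ` is about `n / 64`, so each such step
shrinks the number of bits missing from `n / 2` by the factor `31 / 32`, and for every `β < 1` a
code of length `s` carries `β * n / 2` bits for large `n`.

*Closing the gap.* Rewriting `pair zero zero` to `zero` does not affect halting, and reduces the
number of codes of length `L` to at most `2 ^ (α * L)` for some `α < 1`. By counting the normal
forms of halting codes instead of the codes themselves, `h` needs only `α * n / 2` bits. The
constant `c` of the theorem then only has to rule out small values of `n`.
-/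

open Nat.Partrec (Code)

/-- The length of a code: the number of binary digits of its code number. -/
def codeLength (e : Nat.Partrec.Code) : ℕ := Nat.size (Encodable.encode e)

/-- Plain Kolmogorov complexity of `x : ℕ`: the least `ℓ` such that some code `e`
of length `≤ ℓ` outputs `x` (on input `0`). -/
noncomputable def K (x : ℕ) : ℕ :=
  sInf {ℓ : ℕ | ∃ e : Nat.Partrec.Code, codeLength e ≤ ℓ ∧ e.eval 0 = Part.some x}

/-- Time-bounded Kolmogorov complexity of `x : ℕ` with time bound `t`: the least `ℓ`
such that some code `e` of length `≤ ℓ` outputs `x` within `t` steps, and `⊤` if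
there is no such code. -/
noncomputable def Kt (t : ℕ) (x : ℕ) : ℕ∞ :=
  sInf {ℓ : ℕ∞ | ∃ e : Nat.Partrec.Code,
    (codeLength e : ℕ∞) ≤ ℓ ∧ Nat.Partrec.Code.evaln t e 0 = some x}

/-- `Tn n`: the least time `T` at which the time-bounded complexity of all strings of
length at most `n` (i.e. all `x < 2 ^ n`) equals the true complexity. -/
noncomputable def Tn (n : ℕ) : ℕ :=
  sInf {T : ℕ | ∀ x < 2 ^ n, Kt T x = (K x : ℕ∞)}

/-- `Tn' n`: the least time `T` at which the time-bounded complexity of all strings of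
length at most `n` is at most twice the true complexity. -/
noncomputable def Tn' (n : ℕ) : ℕ :=
  sInf {T : ℕ | ∀ x < 2 ^ n, Kt T x ≤ 2 * (K x : ℕ∞)}

namespace ShortPrograms

open Encodable Denumerable Filter

/-! ### Sequentially separable families of codes -/

/-- The codes `F p`, for `p ∈ T`, cannot be split by a query: on every input at which all of them
are defined, they share one value. -/
def Agree {ι : Type*} (T : Finset ι) (F : ι → Code) : Prop :=
  ∀ y, (∀ p ∈ T, ((F p).eval y).Dom) → ∃ v, ∀ p ∈ T, (F p).eval y = Part.some v

lemma eval_pair_of {a b : Code} {y u v : ℕ} (ha : a.eval y = Part.some u)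
    (hb : b.eval y = Part.some v) : (Code.pair a b).eval y = Part.some (Nat.pair u v) := by
  simp [Code.eval, ha, hb, Seq.seq]

lemma eval_comp_of {a b : Code} {y v : ℕ} (h : b.eval y = Part.some v) :
    (Code.comp a b).eval y = a.eval v := by
  change b.eval y >>= a.eval = _
  rw [h]
  exact Part.bind_some _ _

lemma eval_prec_succ_of {a b : Code} {y p r : ℕ}
    (h : (Code.prec a b).eval (Nat.pair y p) = Part.some r) :
    (Code.prec a b).eval (Nat.pair y (p + 1)) = b.eval (Nat.pair y (Nat.pair p r)) := by
  rw [Code.eval_prec_succ, h]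
  exact Part.bind_some _ _

lemma mem_eval_rfind' {c : Code} {a m x : ℕ} :
    x ∈ (Code.rfind' c).eval (Nat.pair a m) ↔
      ∃ k, x = k + m ∧ 0 ∈ c.eval (Nat.pair a (k + m)) ∧
        ∀ j < k, ∃ v, v ≠ 0 ∧ v ∈ c.eval (Nat.pair a (j + m)) := by
  simp only [Code.eval, Nat.unpaired, Nat.unpair_pair, Part.mem_map_iff]
  constructor
  · rintro ⟨k, hk, rfl⟩
    obtain ⟨hroot, hbefore⟩ := Nat.mem_rfind.1 hk
    refine ⟨k, rfl, by simpa using hroot, fun j hj => ?_⟩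
    simpa [Part.mem_map_iff, and_comm] using hbefore hj
  · rintro ⟨k, rfl, hroot, hbefore⟩
    refine ⟨k, Nat.mem_rfind.2 ⟨by simpa using hroot, fun {j} hj => ?_⟩, rfl⟩
    obtain ⟨v, hv0, hv⟩ := hbefore j hj
    exact (Part.mem_map_iff _).2 ⟨v, hv, by simpa using hv0⟩

namespace Agree

variable {ι κ : Type*} {T : Finset ι} {F G : ι → Code}

lemma pair (hF : Agree T F) (hG : Agree T G) : Agree T fun p => Code.pair (F p) (G p) := by
  intro y hdom
  simp only [Code.eval, Seq.seq, Part.map_eq_map, Part.bind_dom] at hdom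
  obtain ⟨u, hu⟩ := hF y fun p hp => (hdom p hp).1
  obtain ⟨v, hv⟩ := hG y fun p hp => (hdom p hp).2
  exact ⟨_, fun p hp => eval_pair_of (hu p hp) (hv p hp)⟩

lemma comp (hF : Agree T F) (hG : Agree T G) : Agree T fun p => Code.comp (F p) (G p) := by
  intro y hdom
  obtain ⟨v, hv⟩ := hG y fun p hp => (Part.bind_dom.1 (hdom p hp)).1
  obtain ⟨u, hu⟩ := hF v fun p hp => eval_comp_of (hv p hp) ▸ hdom p hp
  exact ⟨u, fun p hp => (eval_comp_of (hv p hp)).trans (hu p hp)⟩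

lemma prec (hF : Agree T F) (hG : Agree T G) : Agree T fun p => Code.prec (F p) (G p) := by
  intro y
  rw [← Nat.pair_unpair y]
  generalize y.unpair.1 = a
  induction y.unpair.2 with
  | zero => simpa only [Code.eval_prec_zero] using hF a
  | succ n ih =>
    intro hdom
    obtain ⟨v, hv⟩ := ih fun p hp => by
      have := hdom p hp
      rw [Code.eval_prec_succ] at this
      exact (Part.bind_dom.1 this).1
    obtain ⟨u, hu⟩ := hG _ fun p hp => eval_prec_succ_of (hv p hp) ▸ hdom p hp
    exact ⟨u, fun p hp => (eval_prec_succ_of (hv p hp)).trans (hu p hp)⟩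

lemma rfind' (hF : Agree T F) : Agree T fun p => Code.rfind' (F p) := by
  intro y hdom
  rcases T.eq_empty_or_nonempty with rfl | hT
  · exact ⟨0, by simp⟩
  obtain ⟨a, m, rfl⟩ : ∃ a m, Nat.pair a m = y := ⟨_, _, Nat.pair_unpair y⟩
  have hsearch : ∀ p ∈ T, ∃ k, 0 ∈ (F p).eval (Nat.pair a (k + m)) ∧
      ∀ j < k, ∃ v, v ≠ 0 ∧ v ∈ (F p).eval (Nat.pair a (j + m)) := fun p hp => by
    obtain ⟨x, hx⟩ := Part.dom_iff_mem.1 (hdom p hp)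
    obtain ⟨k, -, h⟩ := mem_eval_rfind'.1 hx
    exact ⟨k, h⟩
  choose! k hroot hbefore using hsearch
  -- The member whose search ends first forces every other search to end there as well.
  obtain ⟨r, hr, hmin⟩ := T.exists_min_image k hT
  obtain ⟨v, hv⟩ := hF (Nat.pair a (k r + m)) fun p hp => by
    rcases (hmin p hp).eq_or_lt with h | h
    · exact h ▸ Part.dom_iff_mem.2 ⟨_, hroot p hp⟩
    · obtain ⟨v, -, hv⟩ := hbefore p hp _ h
      exact Part.dom_iff_mem.2 ⟨v, hv⟩
  obtain rfl : 0 = v := Part.mem_some_iff.1 (hv r hr ▸ hroot r hr)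
  refine ⟨k r + m, fun p hp => Part.eq_some_iff.2 (mem_eval_rfind'.2 ⟨k p, ?_, hroot p hp,
    hbefore p hp⟩)⟩
  rcases (hmin p hp).eq_or_lt with h | h
  · rw [h]
  · obtain ⟨v, hv0, hv'⟩ := hbefore p hp _ h
    exact absurd (Part.mem_some_iff.1 (hv p hp ▸ hv')) hv0

open Classical in
lemma image {f : κ → ι} {T : Finset κ} (h : Agree T (F ∘ f)) : Agree (T.image f) F := by
  simpa [Agree] using h

end Agree

/-- A finite set of codes is *sequentially separable* if every subset with at least two elements has
a query at which all its members are defined, with at least two different values. Equivalently, an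
adaptive sequence of such queries identifies each member. -/
def SeqSeparable (S : Finset Code) : Prop := ∀ T ⊆ S, 1 < T.card → ¬ Agree T id

lemma SeqSeparable.mono {S S' : Finset Code} (h : SeqSeparable S') (hs : S ⊆ S') :
    SeqSeparable S :=
  fun T hT hcard => h T (hT.trans hs) hcard

lemma SeqSeparable.of_card_le_one {S : Finset Code} (h : S.card ≤ 1) : SeqSeparable S :=
  fun _ hT hcard => absurd (Finset.card_le_card hT) (by omega)

open Classical in
/-- The largest size of a sequentially separable subset of `A`. -/
noncomputable def sepNum (A : Finset Code) : ℕ := (A.powerset.filter SeqSeparable).sup Finset.card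

lemma SeqSeparable.card_le_sepNum {A S : Finset Code} (hS : SeqSeparable S) (h : S ⊆ A) :
    S.card ≤ sepNum A := by
  classical
  exact Finset.le_sup (f := Finset.card) (Finset.mem_filter.2 ⟨Finset.mem_powerset.2 h, hS⟩)

lemma exists_seqSeparable_card_eq (A : Finset Code) :
    ∃ S ⊆ A, SeqSeparable S ∧ S.card = sepNum A := by
  classical
  have hne : (A.powerset.filter SeqSeparable).Nonempty :=
    ⟨∅, Finset.mem_filter.2 ⟨by simp, SeqSeparable.of_card_le_one (by simp)⟩⟩
  obtain ⟨S, hS, h⟩ := Finset.exists_mem_eq_sup _ hne Finset.card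
  rw [Finset.mem_filter, Finset.mem_powerset] at hS
  exact ⟨S, hS.1, hS.2, h.symm⟩

lemma sepNum_mono {A B : Finset Code} (h : A ⊆ B) : sepNum A ≤ sepNum B := by
  obtain ⟨S, hS, hsep, hcard⟩ := exists_seqSeparable_card_eq A
  exact hcard ▸ hsep.card_le_sepNum (hS.trans h)

lemma sepNum_le_card (A : Finset Code) : sepNum A ≤ A.card := by
  obtain ⟨S, hS, -, hcard⟩ := exists_seqSeparable_card_eq A
  exact hcard ▸ Finset.card_le_card hS

lemma sepNum_pos {A : Finset Code} (h : A.Nonempty) : 0 < sepNum A := by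
  obtain ⟨c, hc⟩ := h
  have := (SeqSeparable.of_card_le_one (Finset.card_singleton c).le).card_le_sepNum
    (Finset.singleton_subset_iff.2 hc)
  exact (Finset.card_singleton c).symm.trans_le this

open Classical in
/-- A query at which all members of `A` are defined splits `A` into fibres, and the union of
separable subsets of the fibres is again separable. -/
lemma sum_sepNum_fiber_le {A : Finset Code} {y : ℕ} (hdom : ∀ c ∈ A, (c.eval y).Dom)
    (V : Finset (Part ℕ)) : ∑ v ∈ V, sepNum (A.filter (·.eval y = v)) ≤ sepNum A := by
  choose S hS hsep hcard using fun v => exists_seqSeparable_card_eq (A.filter (·.eval y = v))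
  have hmem : ∀ {v c}, c ∈ S v → c ∈ A ∧ c.eval y = v := fun h => Finset.mem_filter.1 (hS _ h)
  have hdisj : ∀ v ∈ V, ∀ w ∈ V, v ≠ w → Disjoint (S v) (S w) := fun v _ w _ hne =>
    Finset.disjoint_left.2 fun c hv hw => hne ((hmem hv).2.symm.trans (hmem hw).2)
  have hunion : SeqSeparable (V.biUnion S) := by
    intro T hT hlt hag
    have hTS : ∀ c ∈ T, c ∈ S (c.eval y) := fun c hc => by
      obtain ⟨v, -, hcv⟩ := Finset.mem_biUnion.1 (hT hc)
      exact (hmem hcv).2 ▸ hcv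
    obtain ⟨v, hv⟩ := hag y fun c hc => hdom c (hmem (hTS c hc)).1
    exact hsep (Part.some v) T (fun c hc => hv c hc ▸ hTS c hc) hlt hag
  calc ∑ v ∈ V, sepNum (A.filter (·.eval y = v)) = (V.biUnion S).card := by
        rw [Finset.card_biUnion hdisj]
        exact Finset.sum_congr rfl fun v _ => (hcard v).symm
    _ ≤ sepNum A := hunion.card_le_sepNum (Finset.biUnion_subset.2 fun v _ c hc => (hmem hc).1)

section TwoCoordinates

variable {ι : Type*} {F G : ι → Code}

lemma exists_splitting_query [DecidableEq (Part ℕ)] {S : Finset ι} (h : ¬ Agree S F) :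
    ∃ y, (∀ p ∈ S, ((F p).eval y).Dom) ∧ ∀ v, S.filter (fun p => (F p).eval y = v) ⊂ S := by
  simp only [Agree, not_forall] at h
  obtain ⟨y, hdom, hne⟩ := h
  refine ⟨y, hdom, fun v => Finset.filter_ssubset.2 ?_⟩
  by_contra! hv
  rcases S.eq_empty_or_nonempty with rfl | ⟨p, hp⟩
  · exact hne ⟨0, by simp⟩
  · obtain ⟨u, hu⟩ := Part.dom_iff_mem.1 (hdom p hp)
    exact hne ⟨u, fun q hq => ((hv q hq).trans (hv p hp).symm).trans (Part.eq_some_iff.2 hu)⟩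

open Classical in
lemma card_le_sepNum_mul_of_split {S : Finset ι} {y : ℕ} (hdom : ∀ p ∈ S, ((F p).eval y).Dom)
    (hfiber : ∀ v, (S.filter fun p => (F p).eval y = v).card ≤
      sepNum ((S.filter fun p => (F p).eval y = v).image F) *
        sepNum ((S.filter fun p => (F p).eval y = v).image G)) :
    S.card ≤ sepNum (S.image F) * sepNum (S.image G) := by
  have himage : ∀ v, (S.filter fun p => (F p).eval y = v).image F =
      (S.image F).filter (·.eval y = v) := fun v => by rw [Finset.filter_image]
  calc S.card
      = ∑ v ∈ S.image fun p => (F p).eval y, (S.filter fun p => (F p).eval y = v).card :=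
        Finset.card_eq_sum_card_fiberwise fun p hp => Finset.mem_image_of_mem _ hp
    _ ≤ ∑ v ∈ S.image fun p => (F p).eval y,
          sepNum ((S.image F).filter (·.eval y = v)) * sepNum (S.image G) :=
        Finset.sum_le_sum fun v _ => (hfiber v).trans (Nat.mul_le_mul (himage v ▸ le_rfl)
          (sepNum_mono (Finset.image_subset_image (Finset.filter_subset _ _))))
    _ ≤ sepNum (S.image F) * sepNum (S.image G) := by
        rw [← Finset.sum_mul]
        exact Nat.mul_le_mul_right _ (sum_sepNum_fiber_le
          (by simpa only [Finset.forall_mem_image] using hdom) _)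

open Classical in
lemma card_le_sepNum_mul (S : Finset ι)
    (hS : ∀ T ⊆ S, 1 < T.card → ¬ (Agree T F ∧ Agree T G)) :
    S.card ≤ sepNum (S.image F) * sepNum (S.image G) := by
  induction S using Finset.strongInduction with
  | H S ih =>
  rcases S.eq_empty_or_nonempty with rfl | hne
  · simp
  rcases le_or_gt S.card 1 with hcard | hcard
  · exact hcard.trans (Nat.mul_pos (sepNum_pos (hne.image F)) (sepNum_pos (hne.image G)))
  have hfiber : ∀ R ⊂ S, R.card ≤ sepNum (R.image F) * sepNum (R.image G) :=
    fun R hR => ih R hR fun T hT => hS T (hT.trans hR.subset)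
  rcases not_and_or.1 (hS S subset_rfl hcard) with h | h
  · obtain ⟨y, hdom, hlt⟩ := exists_splitting_query h
    exact card_le_sepNum_mul_of_split hdom fun v => hfiber _ (hlt v)
  · obtain ⟨y, hdom, hlt⟩ := exists_splitting_query h
    rw [mul_comm]
    exact card_le_sepNum_mul_of_split hdom fun v => mul_comm (sepNum _) _ ▸ hfiber _ (hlt v)

end TwoCoordinates

/-! ### Separable codes below a bound -/

open Classical in
/-- The codes with code number below `X`. -/
noncomputable def codesBelow (X : ℕ) : Finset Code := (Finset.range X).image (ofNat Code)

lemma mem_codesBelow {X : ℕ} {c : Code} : c ∈ codesBelow X ↔ encode c < X := by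
  classical
  rw [codesBelow, Finset.mem_image]
  exact ⟨fun ⟨a, ha, hac⟩ => by simpa [← hac] using ha,
    fun h => ⟨encode c, Finset.mem_range.2 h, ofNat_encode c⟩⟩

lemma codesBelow_mono : Monotone codesBelow :=
  fun _ _ h _ hc => mem_codesBelow.2 ((mem_codesBelow.1 hc).trans_le h)

lemma card_codesBelow_le (X : ℕ) : (codesBelow X).card ≤ X := by
  classical
  exact Finset.card_image_le.trans (Finset.card_range X).le

/-- The largest size of a sequentially separable set of codes with code number below `X`: its binary
logarithm measures how much information such codes can hold. -/
noncomputable def capacity (X : ℕ) : ℕ := sepNum (codesBelow X)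

lemma capacity_mono : Monotone capacity := fun _ _ h => sepNum_mono (codesBelow_mono h)

lemma capacity_le (X : ℕ) : capacity X ≤ X := (sepNum_le_card _).trans (card_codesBelow_le X)

lemma SeqSeparable.card_le_capacity {X : ℕ} {S : Finset Code} (hS : SeqSeparable S)
    (h : ∀ c ∈ S, encode c < X) : S.card ≤ capacity X :=
  hS.card_le_sepNum fun c hc => mem_codesBelow.2 (h c hc)

lemma capacity_pos {X : ℕ} (h : 0 < X) : 0 < capacity X :=
  sepNum_pos ⟨Code.zero, mem_codesBelow.2 h⟩

lemma capacity_succ_le (X : ℕ) : capacity (X + 1) ≤ capacity X + 1 := by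
  classical
  obtain ⟨S, hS, hsep, hcard⟩ := exists_seqSeparable_card_eq (codesBelow (X + 1))
  have herase : (S.erase (ofNat Code X)).card ≤ capacity X := by
    refine (hsep.mono (Finset.erase_subset _ _)).card_le_capacity fun c hc => ?_
    obtain ⟨hne, hc⟩ := Finset.mem_erase.1 hc
    have hlt := mem_codesBelow.1 (hS hc)
    have : encode c ≠ X := fun h => hne (by rw [← h, ofNat_encode])
    omega
  calc capacity (X + 1) = S.card := hcard.symm
    _ ≤ (S.erase (ofNat Code X)).card + 1 :=
        Nat.le_add_of_sub_le (Finset.pred_card_le_card_erase (a := ofNat Code X))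
    _ ≤ capacity X + 1 := Nat.add_le_add_right herase 1

lemma lt_and_lt_of_pair_lt_sq {a b V : ℕ} (h : Nat.pair a b < V ^ 2) : a < V ∧ b < V := by
  have hmax := Nat.max_sq_add_min_le_pair a b
  exact max_lt_iff.1 (lt_of_pow_lt_pow_left₀ 2 (Nat.zero_le V) (by omega))

lemma pair_lt_sq {a b V : ℕ} (ha : a < V) (hb : b < V) : Nat.pair a b < V ^ 2 :=
  (Nat.pair_lt_max_add_one_sq a b).trans_le (Nat.pow_le_pow_left (max_lt ha hb) 2)

lemma pair_le_pair {a b a' b' : ℕ} (ha : a ≤ a') (hb : b ≤ b') : Nat.pair a b ≤ Nat.pair a' b' :=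
  (StrictMono.monotone (fun _ _ => Nat.pair_lt_pair_left b) ha).trans
    (StrictMono.monotone (fun _ _ => Nat.pair_lt_pair_right a') hb)

lemma encode_pair (a b : Code) :
    encode (Code.pair a b) = 4 * Nat.pair (encode a) (encode b) + 4 := by
  simp only [Code.encodeCode_eq, Code.encodeCode]; ring

lemma encode_comp (a b : Code) :
    encode (Code.comp a b) = 4 * Nat.pair (encode a) (encode b) + 6 := by
  simp only [Code.encodeCode_eq, Code.encodeCode]; ring

lemma encode_prec (a b : Code) :
    encode (Code.prec a b) = 4 * Nat.pair (encode a) (encode b) + 5 := by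
  simp only [Code.encodeCode_eq, Code.encodeCode]; ring

lemma encode_rfind' (a : Code) : encode (Code.rfind' a) = 4 * encode a + 7 := by
  simp only [Code.encodeCode_eq, Code.encodeCode]; ring

lemma pair_injective : (Function.uncurry Code.pair).Injective := by
  rintro ⟨a, b⟩ ⟨a', b'⟩ h
  simpa using h

lemma comp_injective : (Function.uncurry Code.comp).Injective := by
  rintro ⟨a, b⟩ ⟨a', b'⟩ h
  simpa using h

lemma prec_injective : (Function.uncurry Code.prec).Injective := by
  rintro ⟨a, b⟩ ⟨a', b'⟩ h
  simpa using h

lemma rfind'_injective : Code.rfind'.Injective := fun _ _ h => by injection h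

lemma card_le_add_card_preimage (S : Finset Code) :
    S.card ≤ 4 + (S.preimage _ pair_injective.injOn).card +
      (S.preimage _ comp_injective.injOn).card + (S.preimage _ prec_injective.injOn).card +
      (S.preimage _ rfind'_injective.injOn).card := by
  classical
  set atoms : Finset Code := {Code.zero, Code.succ, Code.left, Code.right}
  have hcover : S ⊆ atoms ∪
      (S.preimage _ pair_injective.injOn).image (Function.uncurry Code.pair) ∪
      (S.preimage _ comp_injective.injOn).image (Function.uncurry Code.comp) ∪
      (S.preimage _ prec_injective.injOn).image (Function.uncurry Code.prec) ∪
      (S.preimage _ rfind'_injective.injOn).image Code.rfind' := by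
    intro c hc
    cases c <;> simp [atoms, hc]
  have hatoms : atoms.card ≤ 4 := Finset.card_le_four
  refine (Finset.card_le_card hcover).trans ?_
  iterate 4 refine (Finset.card_union_le _ _).trans (Nat.add_le_add ?_ Finset.card_image_le)
  exact hatoms

lemma card_preimage_le_capacity_sq {N : Code × Code → Code} (hN : N.Injective)
    (hagree : ∀ {T : Finset (Code × Code)}, Agree T Prod.fst → Agree T Prod.snd → Agree T N)
    {V : ℕ} {S : Finset Code} (hS : SeqSeparable S)
    (hlt : ∀ p, N p ∈ S → encode p.1 < V ∧ encode p.2 < V) :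
    (S.preimage N hN.injOn).card ≤ capacity V ^ 2 := by
  classical
  have hmem : ∀ p ∈ S.preimage N hN.injOn, encode p.1 < V ∧ encode p.2 < V :=
    fun p hp => hlt p (Finset.mem_preimage.1 hp)
  calc (S.preimage N hN.injOn).card
      ≤ sepNum ((S.preimage N hN.injOn).image Prod.fst) *
          sepNum ((S.preimage N hN.injOn).image Prod.snd) := by
        refine card_le_sepNum_mul _ fun T hT hcard hag => hS (T.image N) ?_ ?_ ?_
        · exact Finset.image_subset_iff.2 fun p hp => Finset.mem_preimage.1 (hT hp)
        · rwa [Finset.card_image_of_injective _ hN]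
        · exact Agree.image (F := id) (f := N) (hagree hag.1 hag.2)
    _ ≤ capacity V * capacity V := Nat.mul_le_mul
        (sepNum_mono (Finset.image_subset_iff.2 fun p hp => mem_codesBelow.2 (hmem p hp).1))
        (sepNum_mono (Finset.image_subset_iff.2 fun p hp => mem_codesBelow.2 (hmem p hp).2))
    _ = capacity V ^ 2 := (sq _).symm

lemma card_preimage_rfind'_le_capacity {V : ℕ} {S : Finset Code} (hS : SeqSeparable S)
    (hlt : ∀ c, Code.rfind' c ∈ S → encode c < V) :
    (S.preimage _ rfind'_injective.injOn).card ≤ capacity V := by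
  classical
  refine SeqSeparable.card_le_capacity (fun T hT hcard hag => hS (T.image Code.rfind') ?_ ?_ ?_)
    fun c hc => hlt c (Finset.mem_preimage.1 hc)
  · exact Finset.image_subset_iff.2 fun p hp => Finset.mem_preimage.1 (hT hp)
  · rwa [Finset.card_image_of_injective _ rfind'_injective]
  · exact Agree.image (F := id) (f := Code.rfind') hag.rfind'

lemma capacity_le_add_capacity_div_four {V Y : ℕ} (hY : Y ≤ 4 * V ^ 2 + 3) :
    capacity Y ≤ 4 + 3 * capacity V ^ 2 + capacity (Y / 4) := by
  obtain ⟨S, hS, hsep, hcard⟩ := exists_seqSeparable_card_eq (codesBelow Y)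
  have hlt : ∀ c ∈ S, encode c < Y := fun c hc => mem_codesBelow.1 (hS hc)
  have hpair := card_preimage_le_capacity_sq pair_injective Agree.pair hsep fun p hp =>
    lt_and_lt_of_pair_lt_sq (V := V) (by have := encode_pair .. ▸ hlt _ hp; omega)
  have hcomp := card_preimage_le_capacity_sq comp_injective Agree.comp hsep fun p hp =>
    lt_and_lt_of_pair_lt_sq (V := V) (by have := encode_comp .. ▸ hlt _ hp; omega)
  have hprec := card_preimage_le_capacity_sq prec_injective Agree.prec hsep fun p hp =>
    lt_and_lt_of_pair_lt_sq (V := V) (by have := encode_prec .. ▸ hlt _ hp; omega)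
  have hrfind := card_preimage_rfind'_le_capacity (V := Y / 4) hsep fun c hc => by
    have := encode_rfind' c ▸ hlt _ hc
    omega
  have hnodes := card_le_add_card_preimage S
  rw [hcard] at hnodes
  change capacity Y ≤ _ at hnodes
  omega

lemma size_div_four_add_one_le {Y : ℕ} (h : 0 < Y) : Nat.size (Y / 4) + 1 ≤ Nat.size Y := by
  obtain ⟨k, hk⟩ := Nat.exists_eq_add_one.2 (Nat.size_pos.2 h)
  have hlt := Nat.size_le.1 hk.le
  rw [pow_succ] at hlt
  rw [hk]
  exact Nat.succ_le_succ (Nat.size_le.2 (by omega))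

lemma capacity_le_size_mul_capacity_sq {V Y : ℕ} (hV : 0 < V) (hY : Y ≤ 4 * V ^ 2 + 3) :
    capacity Y ≤ Nat.size Y * (7 * capacity V ^ 2) := by
  induction Y using Nat.strong_induction_on with
  | _ Y ih =>
  rcases Nat.eq_zero_or_pos Y with rfl | hpos
  · exact (capacity_le 0).trans (Nat.zero_le _)
  have hone : 1 ≤ capacity V ^ 2 := Nat.one_le_pow _ _ (capacity_pos hV)
  calc capacity Y ≤ 4 + 3 * capacity V ^ 2 + capacity (Y / 4) :=
        capacity_le_add_capacity_div_four hY
    _ ≤ 7 * capacity V ^ 2 + Nat.size (Y / 4) * (7 * capacity V ^ 2) := by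
        have := ih (Y / 4) (by omega) (by omega)
        omega
    _ = (Nat.size (Y / 4) + 1) * (7 * capacity V ^ 2) := by ring
    _ ≤ Nat.size Y * (7 * capacity V ^ 2) :=
        Nat.mul_le_mul_right _ (size_div_four_add_one_le hpos)

/-! ### Counting normal forms -/

/-- `Code.pair a b`, except that `Code.pair Code.zero Code.zero` is rewritten to the equivalent
`Code.zero`. -/
def normPair (a b : Code) : Code :=
  if encode a + encode b = 0 then Code.zero else Code.pair a b

lemma normPair_of_ne {a b : Code} (h : (a, b) ≠ (Code.zero, Code.zero)) :
    normPair a b = Code.pair a b := by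
  have hzero : ∀ {c : Code}, encode c = 0 → c = Code.zero := fun h => encode_injective h
  refine if_neg fun h0 => h ?_
  rw [hzero (Nat.add_eq_zero_iff.1 h0).1, hzero (Nat.add_eq_zero_iff.1 h0).2]

lemma normPair_zero_zero : normPair Code.zero Code.zero = Code.zero := rfl

lemma eval_normPair (a b : Code) : (normPair a b).eval = (Code.pair a b).eval := by
  by_cases h : (a, b) = (Code.zero, Code.zero)
  · obtain ⟨rfl, rfl⟩ := Prod.mk.inj h
    funext y
    exact (eval_pair_of (u := 0) (v := 0) rfl rfl).symm
  · rw [normPair_of_ne h]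

lemma primrec_normPair : Primrec₂ normPair :=
  Primrec.ite (Primrec.eq.comp (Primrec.nat_add.comp (Primrec.encode.comp Primrec.fst)
    (Primrec.encode.comp Primrec.snd)) (Primrec.const 0)) (Primrec.const _) Code.primrec₂_pair

/-- The normal form of a code. A single rewriting rule suffices to make normal forms of codes
polynomially scarcer than codes. -/
def nf : Code → Code
  | Code.pair a b => normPair (nf a) (nf b)
  | Code.comp a b => Code.comp (nf a) (nf b)
  | Code.prec a b => Code.prec (nf a) (nf b)
  | Code.rfind' a => Code.rfind' (nf a)
  | c => c

lemma eval_nf (c : Code) : (nf c).eval = c.eval := by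
  induction c with
  | zero | succ | left | right => rfl
  | pair a b iha ihb => simp only [nf, eval_normPair, Code.eval, iha, ihb]; rfl
  | comp a b iha ihb => simp only [nf, Code.eval, iha, ihb]; rfl
  | prec a b iha ihb => simp only [nf, Code.eval, iha, ihb]; rfl
  | rfind' a iha => simp only [nf, Code.eval, iha]; rfl

lemma encode_normPair_le (a b : Code) : encode (normPair a b) ≤ encode (Code.pair a b) := by
  by_cases h : (a, b) = (Code.zero, Code.zero)
  · obtain ⟨rfl, rfl⟩ := Prod.mk.inj h
    exact Nat.zero_le _
  · rw [normPair_of_ne h]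

lemma encode_nf_le (c : Code) : encode (nf c) ≤ encode c := by
  induction c with
  | zero | succ | left | right => exact le_rfl
  | pair a b iha ihb =>
    refine (encode_normPair_le _ _).trans ?_
    have := pair_le_pair iha ihb
    rw [encode_pair, encode_pair]
    omega
  | comp a b iha ihb =>
    have := pair_le_pair iha ihb
    rw [nf, encode_comp, encode_comp]
    omega
  | prec a b iha ihb =>
    have := pair_le_pair iha ihb
    rw [nf, encode_prec, encode_prec]
    omega
  | rfind' a iha =>
    rw [nf, encode_rfind', encode_rfind']
    omega

lemma primrec_nf : Primrec nf := by
  have hfst : Primrec fun p : Code × Code × Code × Code × Code => p.2.2.2.1 :=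
    Primrec.fst.comp (Primrec.snd.comp (Primrec.snd.comp Primrec.snd))
  have hsnd : Primrec fun p : Code × Code × Code × Code × Code => p.2.2.2.2 :=
    Primrec.snd.comp (Primrec.snd.comp (Primrec.snd.comp Primrec.snd))
  refine (Code.primrec_recOn' (pr := fun _ p => normPair p.2.2.1 p.2.2.2)
    (co := fun _ p => Code.comp p.2.2.1 p.2.2.2) (pc := fun _ p => Code.prec p.2.2.1 p.2.2.2)
    (rf := fun _ p => Code.rfind' p.2) Primrec.id (Primrec.const Code.zero)
    (Primrec.const Code.succ) (Primrec.const Code.left) (Primrec.const Code.right)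
    (primrec_normPair.comp hfst hsnd) (Code.primrec₂_comp.comp hfst hsnd)
    (Code.primrec₂_prec.comp hfst hsnd)
    (Code.primrec_rfind'.comp (Primrec.snd.comp Primrec.snd))).of_eq fun c => ?_
  induction c with
  | zero | succ | left | right => rfl
  | pair a b iha ihb => exact congrArg₂ normPair iha ihb
  | comp a b iha ihb => exact congrArg₂ Code.comp iha ihb
  | prec a b iha ihb => exact congrArg₂ Code.prec iha ihb
  | rfind' a iha => exact congrArg Code.rfind' iha

open Classical in
/-- The normal forms of the codes with code number below `X`. -/
noncomputable def forms (X : ℕ) : Finset Code := (codesBelow X).image nf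

lemma mem_forms {X : ℕ} {c : Code} : c ∈ forms X ↔ ∃ a, encode a < X ∧ nf a = c := by
  simp only [forms, Finset.mem_image, mem_codesBelow]

lemma nf_mem_forms {X : ℕ} {c : Code} (h : encode c < X) : nf c ∈ forms X :=
  mem_forms.2 ⟨c, h, rfl⟩

lemma zero_mem_forms {X : ℕ} (hX : 0 < X) : Code.zero ∈ forms X :=
  nf_mem_forms (c := Code.zero) hX

-- The normal forms of `pair zero zero` and `rfind' (pair zero zero)`, the codes with numbers 4 and
-- 23, are those of smaller codes.
lemma card_forms_add_two_le {X : ℕ} (hX : 24 ≤ X) : (forms X).card + 2 ≤ X := by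
  classical
  set c₄ := Code.pair Code.zero Code.zero
  have hc₄ : encode c₄ = 4 := encode_pair ..
  have hc₂₃ : encode (Code.rfind' c₄) = 23 := by rw [encode_rfind', hc₄]
  have h₄ : c₄ ∈ codesBelow X := mem_codesBelow.2 (by omega)
  have h₂₃ : Code.rfind' c₄ ∈ (codesBelow X).erase c₄ :=
    Finset.mem_erase.2 ⟨nofun, mem_codesBelow.2 (by omega)⟩
  have h₀ : encode Code.zero < X := by change 0 < X; omega
  have h₇ : encode (Code.rfind' Code.zero) < X := by change 7 < X; omega
  have hsub : forms X ⊆ (((codesBelow X).erase c₄).erase (Code.rfind' c₄)).image nf := by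
    intro c hc
    obtain ⟨a, ha, rfl⟩ := mem_forms.1 hc
    rcases eq_or_ne a c₄ with rfl | hne₄
    · exact Finset.mem_image.2 ⟨Code.zero, by simp [mem_codesBelow, h₀, c₄], rfl⟩
    rcases eq_or_ne a (Code.rfind' c₄) with rfl | hne₂₃
    · exact Finset.mem_image.2 ⟨Code.rfind' Code.zero, by simp [mem_codesBelow, h₇, c₄], rfl⟩
    · exact Finset.mem_image_of_mem _ (by simp [mem_codesBelow, *])
  have hcard := (Finset.card_le_card hsub).trans Finset.card_image_le
  have hall := card_codesBelow_le X
  rw [← Finset.card_erase_add_one h₄, ← Finset.card_erase_add_one h₂₃] at hall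
  omega

open Classical in
lemma pair_mem_forms {X V : ℕ} (hX : X ≤ 4 * V ^ 2 + 4) {p : Code × Code}
    (h : Function.uncurry Code.pair p ∈ forms X) :
    p ∈ (forms V ×ˢ forms V).erase (Code.zero, Code.zero) := by
  obtain ⟨c, hc, hcp⟩ := mem_forms.1 h
  rw [Function.uncurry_def] at hcp
  cases c with
  | pair a b =>
    rw [encode_pair] at hc
    obtain ⟨ha, hb⟩ := lt_and_lt_of_pair_lt_sq (a := encode a) (b := encode b) (V := V) (by omega)
    have hne : (nf a, nf b) ≠ (Code.zero, Code.zero) := fun h => by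
      obtain ⟨ha0, hb0⟩ := Prod.mk.inj h
      simp [nf, ha0, hb0, normPair_zero_zero] at hcp
    obtain rfl : (nf a, nf b) = p := pair_injective ((normPair_of_ne hne).symm.trans hcp)
    exact Finset.mem_erase.2 ⟨hne, Finset.mem_product.2 ⟨nf_mem_forms ha, nf_mem_forms hb⟩⟩
  | _ => simp [nf] at hcp

lemma comp_mem_forms {X V : ℕ} (hX : X ≤ 4 * V ^ 2 + 4) {p : Code × Code}
    (h : Function.uncurry Code.comp p ∈ forms X) : p ∈ forms V ×ˢ forms V := by
  obtain ⟨c, hc, hcp⟩ := mem_forms.1 h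
  rw [Function.uncurry_def] at hcp
  cases c with
  | comp a b =>
    rw [encode_comp] at hc
    obtain ⟨ha, hb⟩ := lt_and_lt_of_pair_lt_sq (a := encode a) (b := encode b) (V := V) (by omega)
    obtain rfl : (nf a, nf b) = p := comp_injective hcp
    exact Finset.mem_product.2 ⟨nf_mem_forms ha, nf_mem_forms hb⟩
  | pair a b => simp [nf, normPair, ite_eq_iff] at hcp
  | _ => simp [nf] at hcp

lemma prec_mem_forms {X V : ℕ} (hX : X ≤ 4 * V ^ 2 + 4) {p : Code × Code}
    (h : Function.uncurry Code.prec p ∈ forms X) : p ∈ forms V ×ˢ forms V := by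
  obtain ⟨c, hc, hcp⟩ := mem_forms.1 h
  rw [Function.uncurry_def] at hcp
  cases c with
  | prec a b =>
    rw [encode_prec] at hc
    obtain ⟨ha, hb⟩ := lt_and_lt_of_pair_lt_sq (a := encode a) (b := encode b) (V := V) (by omega)
    obtain rfl : (nf a, nf b) = p := prec_injective hcp
    exact Finset.mem_product.2 ⟨nf_mem_forms ha, nf_mem_forms hb⟩
  | pair a b => simp [nf, normPair, ite_eq_iff] at hcp
  | _ => simp [nf] at hcp

lemma rfind'_mem_forms {X V : ℕ} (hX : X ≤ 4 * V + 7) {c : Code}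
    (h : Code.rfind' c ∈ forms X) : c ∈ forms V := by
  obtain ⟨d, hd, hdc⟩ := mem_forms.1 h
  cases d with
  | rfind' a =>
    rw [encode_rfind'] at hd
    obtain rfl : nf a = c := rfind'_injective hdc
    exact nf_mem_forms (by omega)
  | pair a b => simp [nf, normPair, ite_eq_iff] at hdc
  | _ => simp [nf] at hdc

lemma card_forms_le {X V W : ℕ} (hV : 0 < V) (hX : X ≤ 4 * V ^ 2 + 4) (hW : X ≤ 4 * W + 7) :
    (forms X).card ≤ 3 * (forms V).card ^ 2 + (forms W).card + 3 := by
  classical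
  have hpair := Finset.card_le_card
    (s := (forms X).preimage _ pair_injective.injOn) fun p hp =>
      pair_mem_forms hX (Finset.mem_preimage.1 hp)
  have hcomp := Finset.card_le_card
    (s := (forms X).preimage _ comp_injective.injOn) fun p hp =>
      comp_mem_forms hX (Finset.mem_preimage.1 hp)
  have hprec := Finset.card_le_card
    (s := (forms X).preimage _ prec_injective.injOn) fun p hp =>
      prec_mem_forms hX (Finset.mem_preimage.1 hp)
  have hrfind := Finset.card_le_card
    (s := (forms X).preimage _ rfind'_injective.injOn) fun c hc =>
      rfind'_mem_forms hW (Finset.mem_preimage.1 hc)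
  have hzero := zero_mem_forms hV
  rw [Finset.card_erase_of_mem (Finset.mem_product.2 ⟨hzero, hzero⟩)] at hpair
  rw [Finset.card_product, ← sq] at hpair hcomp hprec
  have hpos : 0 < (forms V).card ^ 2 := pow_pos (Finset.card_pos.2 ⟨_, hzero⟩) 2
  have hnodes := card_le_add_card_preimage (forms X)
  omega

-- The second condition starts the induction below and the first one carries it on; both hold
-- strictly at `α = 1`.
lemma exists_exponent : ∃ α ∈ Set.Ioo (0 : ℝ) 1, 3 * (4999 / 5000) + 1 ≤ (4 : ℝ) ^ α ∧
    ∀ u ∈ Finset.Ico (23 : ℕ) 2119, (u : ℝ) - 1 / 2 ≤ 4999 / 5000 * (u : ℝ) ^ α := by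
  have hcont : ∀ b : ℝ, b ≠ 0 → Tendsto (b ^ · : ℝ → ℝ) (nhdsWithin 1 (Set.Iio 1)) (nhds b) :=
    fun b hb => by
      simpa using ((Real.continuous_const_rpow hb).tendsto 1).mono_left nhdsWithin_le_nhds
  have hfour := (hcont 4 (by norm_num)).eventually_const_le
    (u := 3 * (4999 / 5000) + 1) (by norm_num)
  have hbase : ∀ᶠ α in nhdsWithin (1 : ℝ) (Set.Iio 1), ∀ u ∈ Finset.Ico (23 : ℕ) 2119,
      (u : ℝ) - 1 / 2 ≤ 4999 / 5000 * (u : ℝ) ^ α := by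
    refine (eventually_all_finset _).2 fun u hu => ?_
    obtain ⟨hlow, hhigh⟩ := Finset.mem_Ico.1 hu
    have hu' : (u : ℝ) < 2119 := by exact_mod_cast hhigh
    refine ((hcont u (by norm_cast; omega)).const_mul (4999 / 5000)).eventually_const_le ?_
    linarith
  obtain ⟨α, ⟨hα4, hαbase⟩, hα⟩ := ((hfour.and hbase).and
    (Ioo_mem_nhdsLT (zero_lt_one' ℝ))).exists
  exact ⟨α, hα, hα4, hαbase⟩

-- With `A = 4999 / 5000`, `r = √t` and `t ≈ u / 4`, the bound `A * r ^ α - 1 / 2` is squared in the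
-- recursion for normal forms, and the cross term `A * r ^ α` absorbs the additive constants.
lemma card_forms_succ_step {α : ℝ} (hα : 0 < α) (hα4 : 3 * (4999 / 5000) + 1 ≤ (4 : ℝ) ^ α)
    {u r t : ℕ} (hr : r ^ 2 ≤ t) (htr : t < (r + 1) ^ 2) (htu : 4 * t ≤ u) (hut : u ≤ 4 * t + 6)
    (ihr : ((forms (r + 1)).card : ℝ) ≤ 4999 / 5000 * (r : ℝ) ^ α - 1 / 2)
    (iht : ((forms (t + 1)).card : ℝ) ≤ 4999 / 5000 * (t : ℝ) ^ α - 1 / 2) :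
    ((forms (u + 1)).card : ℝ) ≤ 4999 / 5000 * (u : ℝ) ^ α - 1 / 2 := by
  have hrec : ((forms (u + 1)).card : ℝ) ≤
      3 * (forms (r + 1)).card ^ 2 + (forms (t + 1)).card + 3 := by
    exact_mod_cast card_forms_le (V := r + 1) (W := t + 1) r.succ_pos (by omega) (by omega)
  have hone : (1 : ℝ) ≤ (forms (r + 1)).card := by
    exact_mod_cast Finset.card_pos.2 ⟨_, zero_mem_forms r.succ_pos⟩
  have hsq : ((r : ℝ) ^ α) ^ 2 ≤ (t : ℝ) ^ α := by
    rw [← Real.rpow_mul_natCast r.cast_nonneg, mul_comm, Real.rpow_natCast_mul r.cast_nonneg]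
    exact Real.rpow_le_rpow (by positivity) (by exact_mod_cast hr) hα.le
  have hfour : (4 : ℝ) ^ α * (t : ℝ) ^ α ≤ (u : ℝ) ^ α := by
    rw [← Real.mul_rpow (by norm_num) t.cast_nonneg]
    exact Real.rpow_le_rpow (by positivity) (by exact_mod_cast htu) hα.le
  have ht0 : (0 : ℝ) ≤ (t : ℝ) ^ α := by positivity
  nlinarith [mul_le_mul_of_nonneg_right hα4 ht0, pow_le_pow_left₀ (by linarith) ihr 2]

lemma exists_card_forms_le_rpow :
    ∃ α ∈ Set.Ioo (0 : ℝ) 1, ∀ X ≥ 24, ((forms X).card : ℝ) ≤ (X : ℝ) ^ α := by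
  obtain ⟨α, hα, hα4, hαbase⟩ := exists_exponent
  have hbound : ∀ u ≥ 23, ((forms (u + 1)).card : ℝ) ≤ 4999 / 5000 * (u : ℝ) ^ α - 1 / 2 := by
    intro u
    induction u using Nat.strong_induction_on with
    | _ u ih =>
    intro hu
    rcases lt_or_ge u 2119 with hsmall | hlarge
    · have hcard : ((forms (u + 1)).card : ℝ) + 2 ≤ u + 1 := by
        exact_mod_cast card_forms_add_two_le (X := u + 1) (by omega)
      linarith [hαbase u (Finset.mem_Ico.2 ⟨hu, hsmall⟩)]
    · have ht : 529 ≤ (u - 3) / 4 := by omega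
      have hr : 23 ≤ Nat.sqrt ((u - 3) / 4) := Nat.le_sqrt.2 ht
      have hrt := Nat.sqrt_le_self ((u - 3) / 4)
      exact card_forms_succ_step hα.1 hα4 (Nat.sqrt_le' _) (Nat.lt_succ_sqrt' _) (by omega)
        (by omega) (ih _ (by omega) hr) (ih _ (by omega) (by omega))
  refine ⟨α, hα, fun X hX => ?_⟩
  obtain ⟨u, rfl⟩ := Nat.exists_eq_add_one.2 (show 0 < X by omega)
  have hmono : (u : ℝ) ^ α ≤ ((u + 1 : ℕ) : ℝ) ^ α :=
    Real.rpow_le_rpow u.cast_nonneg (by exact_mod_cast u.le_succ) hα.1.le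
  have h0 : (0 : ℝ) ≤ (u : ℝ) ^ α := by positivity
  linarith [hbound u (by omega)]

/-! ### Codes that carry information -/

lemma exists_code_of_partrec {α σ : Type} [Primcodable α] [Primcodable σ] {f : α →. σ}
    (hf : Partrec f) : ∃ c : Code, ∀ a, c.eval (encode a) = (f a).map encode := by
  obtain ⟨c, hc⟩ := Code.exists_code.1 hf
  exact ⟨c, fun a => by rw [hc]; simp [encodek]⟩

lemma exists_code_of_computable {α σ : Type} [Primcodable α] [Primcodable σ] {f : α → σ}
    (hf : Computable f) : ∃ c : Code, ∀ a, c.eval (encode a) = Part.some (encode (f a)) := by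
  obtain ⟨c, hc⟩ := exists_code_of_partrec (f := (f : α →. σ)) hf
  exact ⟨c, fun a => by rw [hc]; simp⟩

lemma encode_comp_lt {a b : Code} {V Y : ℕ} (ha : encode a < V) (hb : encode b < V)
    (hY : 4 * V ^ 2 + 3 ≤ Y) : encode (Code.comp a b) < Y := by
  have := pair_lt_sq ha hb
  rw [encode_comp]
  omega

lemma encode_prec_lt {a b : Code} {V Y : ℕ} (ha : encode a < V) (hb : encode b < V)
    (hY : 4 * V ^ 2 + 3 ≤ Y) : encode (Code.prec a b) < Y := by
  have := pair_lt_sq ha hb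
  rw [encode_prec]
  omega

lemma eight_mul_encode_comp_succ_le {a b : Code} {P : ℕ} (ha : 8 * (encode a + 1) ≤ P)
    (hb : 8 * (encode b + 1) ≤ P) : 8 * (encode (Code.comp a b) + 1) ≤ P ^ 2 := by
  obtain ⟨V, hV⟩ : ∃ V, V = max (encode a) (encode b) + 1 := ⟨_, rfl⟩
  have hcomp : encode (Code.comp a b) < 4 * V ^ 2 + 3 :=
    encode_comp_lt (by omega) (by omega) le_rfl
  have hone : 1 ≤ V ^ 2 := Nat.one_le_pow _ _ (by omega)
  calc 8 * (encode (Code.comp a b) + 1) ≤ (8 * V) ^ 2 := by rw [mul_pow]; omega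
    _ ≤ P ^ 2 := Nat.pow_le_pow_left (by omega) 2

lemma eight_mul_encode_succ_le (c : Code) : 8 * (encode c + 1) ≤ 2 ^ (encode c + 3) := by
  have : encode c < 2 ^ encode c := Nat.lt_two_pow_self
  rw [pow_add]
  omega

lemma exists_push_bit_code (w : ℕ) : ∃ u : Code, ∀ acc z,
    u.eval (Nat.pair acc z) = Part.some (Nat.pair (acc * 2 + w) z) := by
  have hpush : Primrec fun p : ℕ × ℕ => (p.1 * 2 + w, p.2) :=
    (Primrec.nat_add.comp (Primrec.nat_mul.comp Primrec.fst (Primrec.const 2))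
      (Primrec.const w)).pair Primrec.snd
  obtain ⟨u, hu⟩ := exists_code_of_computable hpush.to_comp
  exact ⟨u, fun acc z => hu (acc, z)⟩

-- Pushing the bits of `w` one after the other would nest compositions too deeply, so that the code
-- number would be doubly exponential; a balanced tree of compositions keeps it polynomial in `w`.
lemma exists_push_code : ∃ g : ℕ, ∀ k, ∀ w < 2 ^ 2 ^ k, ∃ u : Code,
    8 * (encode u + 1) ≤ 2 ^ (g * 2 ^ k) ∧
      ∀ acc z, u.eval (Nat.pair acc z) = Part.some (Nat.pair (acc * 2 ^ 2 ^ k + w) z) := by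
  choose u hu using exists_push_bit_code
  refine ⟨max (encode (u 0)) (encode (u 1)) + 3, fun k => ?_⟩
  induction k with
  | zero =>
    intro w hw
    refine ⟨u w, (eight_mul_encode_succ_le _).trans (Nat.pow_le_pow_right two_pos ?_), hu w⟩
    obtain rfl | rfl : w = 0 ∨ w = 1 := by simp only [pow_zero, pow_one] at hw; omega
    all_goals omega
  | succ k ih =>
    intro w hw
    have hsq : 2 ^ 2 ^ (k + 1) = 2 ^ 2 ^ k * 2 ^ 2 ^ k := by rw [pow_succ 2 k, pow_mul, sq]
    obtain ⟨low, hlow, hlow'⟩ := ih (w % 2 ^ 2 ^ k) (Nat.mod_lt _ (by positivity))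
    obtain ⟨high, hhigh, hhigh'⟩ := ih (w / 2 ^ 2 ^ k) (Nat.div_lt_of_lt_mul (by rwa [← hsq]))
    refine ⟨Code.comp low high, ?_, fun acc z => ?_⟩
    · rw [pow_succ 2 k, ← mul_assoc, pow_mul]
      exact eight_mul_encode_comp_succ_le hlow hhigh
    · rw [eval_comp_of (hhigh' _ _), hlow', hsq, add_mul, mul_assoc, add_assoc, Nat.div_add_mod']

lemma two_pow_size_le {w : ℕ} (hw : 0 < w) : 2 ^ Nat.size w ≤ 2 * w := by
  obtain ⟨b, hb⟩ := Nat.exists_eq_add_one.2 (Nat.size_pos.2 hw)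
  rw [hb, pow_succ']
  exact Nat.mul_le_mul_left 2 (Nat.lt_size.1 (by omega))

lemma exists_const_code : ∃ D : ℕ, ∀ w, ∃ u : Code, encode u < (w + 2) ^ D ∧
    ∀ z, u.eval z = Part.some (Nat.pair w z) := by
  obtain ⟨g, hpush⟩ := exists_push_code
  obtain ⟨c, hc⟩ : ∃ c : Code, ∀ z, c.eval z = Part.some (Nat.pair 0 z) :=
    exists_code_of_computable (f := fun z => (0, z)) ((Computable.const 0).pair Computable.id)
  set g' := max g (encode c + 3)
  refine ⟨2 * (4 * g'), fun w => ?_⟩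
  obtain ⟨k, hk, hk'⟩ := exists_nat_pow_near
    (show 1 ≤ Nat.size (w + 1) from Nat.size_pos.2 w.succ_pos) one_lt_two
  obtain ⟨u, hu, hu'⟩ := hpush (k + 1) w
    (w.lt_succ_self.trans (Nat.size_le.1 hk'.le))
  refine ⟨Code.comp u c, ?_, fun z => ?_⟩
  · have hpow : 8 * (encode (Code.comp u c) + 1) ≤ (2 ^ (g' * 2 ^ (k + 1))) ^ 2 := by
      refine eight_mul_encode_comp_succ_le (hu.trans ?_) ((eight_mul_encode_succ_le c).trans ?_)
      · exact Nat.pow_le_pow_right two_pos (Nat.mul_le_mul_right _ (le_max_left _ _))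
      · exact Nat.pow_le_pow_right two_pos ((le_max_right _ _).trans
          (Nat.le_mul_of_pos_right _ (by positivity)))
    calc encode (Code.comp u c) < (2 ^ (g' * 2 ^ (k + 1))) ^ 2 := by omega
      _ = (2 ^ 2 ^ k) ^ (4 * g') := by ring
      _ ≤ (2 ^ Nat.size (w + 1)) ^ (4 * g') :=
          Nat.pow_le_pow_left (Nat.pow_le_pow_right two_pos hk) _
      _ ≤ ((w + 2) ^ 2) ^ (4 * g') :=
          Nat.pow_le_pow_left ((two_pow_size_le w.succ_pos).trans (by nlinarith)) _
      _ = (w + 2) ^ (2 * (4 * g')) := (pow_mul _ _ _).symm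
  · rw [eval_comp_of (hc z), hu', zero_mul, zero_add]

lemma SeqSeparable.image_of_eval {ι : Type*} [DecidableEq Code] {S : Finset ι} {u : ι → Code}
    {f : ι → ℕ} (hf : f.Injective) {y : ℕ} (h : ∀ w ∈ S, (u w).eval y = Part.some (f w)) :
    SeqSeparable (S.image u) := by
  intro T hT hcard hag
  obtain ⟨a, ha, b, hb, hab⟩ := Finset.one_lt_card.1 hcard
  obtain ⟨v, hv⟩ := hag y fun c hc => by
    obtain ⟨w, hw, rfl⟩ := Finset.mem_image.1 (hT hc)
    exact h w hw ▸ trivial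
  obtain ⟨i, hi, rfl⟩ := Finset.mem_image.1 (hT ha)
  obtain ⟨j, hj, rfl⟩ := Finset.mem_image.1 (hT hb)
  have hij : f i = f j := Part.some_injective
    ((h i hi).symm.trans ((hv _ ha).trans ((hv _ hb).symm.trans (h j hj))))
  exact hab (congrArg u (hf hij))

lemma exists_two_pow_le_capacity : ∃ g : ℕ, 1 ≤ g ∧
    ∀ b, 1 ≤ b → 2 ^ b ≤ capacity (2 ^ (g * b)) := by
  classical
  obtain ⟨D, hconst⟩ := exists_const_code
  choose u hlt hu using hconst
  refine ⟨2 * D + 1, by omega, fun b hb => ?_⟩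
  have hinj : u.Injective := fun v w h => by
    have := (hu v 0).symm.trans ((congrArg (Code.eval · 0) h).trans (hu w 0))
    exact (Nat.pair_eq_pair.1 (Part.some_injective this)).1
  have hsep : SeqSeparable ((Finset.range (2 ^ b)).image u) :=
    SeqSeparable.image_of_eval (f := (Nat.pair · 0)) (fun v w h => (Nat.pair_eq_pair.1 h).1)
      fun w _ => hu w 0
  have hbound : ∀ w < 2 ^ b, encode (u w) < 2 ^ ((2 * D + 1) * b) := fun w hw => by
    have htwo : 2 ≤ 2 ^ b := Nat.le_self_pow (by omega) 2
    calc encode (u w) < (w + 2) ^ D := hlt w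
      _ ≤ (2 ^ b * 2 ^ b) ^ D := Nat.pow_le_pow_left (by nlinarith) D
      _ = 2 ^ (2 * D * b) := by ring
      _ ≤ 2 ^ ((2 * D + 1) * b) := Nat.pow_le_pow_right two_pos (by nlinarith)
  calc 2 ^ b = ((Finset.range (2 ^ b)).image u).card := by
        rw [Finset.card_image_of_injective _ hinj, Finset.card_range]
    _ ≤ capacity (2 ^ ((2 * D + 1) * b)) := hsep.card_le_capacity
        (by simpa only [Finset.forall_mem_image, Finset.mem_range] using hbound)

/-- Eventual domination by a power of the argument. -/
def PolyBounded (f : ℕ → ℕ) : Prop := ∃ C : ℕ, ∀ᶠ n in atTop, f n ≤ n ^ C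

namespace PolyBounded

variable {f g : ℕ → ℕ}

lemma mono (hg : PolyBounded g) (h : ∀ᶠ n in atTop, f n ≤ g n) : PolyBounded f := by
  obtain ⟨C, hC⟩ := hg
  refine ⟨C, ?_⟩
  filter_upwards [hC, h] with n hgn hfg using hfg.trans hgn

protected lemma id : PolyBounded fun n => n := ⟨1, Eventually.of_forall fun n => by simp⟩

lemma const (c : ℕ) : PolyBounded fun _ => c :=
  ⟨1, by filter_upwards [eventually_ge_atTop c] with n hn; simpa using hn⟩

lemma mul (hf : PolyBounded f) (hg : PolyBounded g) : PolyBounded fun n => f n * g n := by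
  obtain ⟨C, hC⟩ := hf
  obtain ⟨D, hD⟩ := hg
  refine ⟨C + D, ?_⟩
  filter_upwards [hC, hD] with n hfn hgn
  rw [pow_add]
  exact Nat.mul_le_mul hfn hgn

lemma add (hf : PolyBounded f) (hg : PolyBounded g) : PolyBounded fun n => f n + g n := by
  obtain ⟨C, hC⟩ := hf
  obtain ⟨D, hD⟩ := hg
  refine ⟨max C D + 1, ?_⟩
  filter_upwards [hC, hD, eventually_ge_atTop 2] with n hfn hgn hn
  calc f n + g n ≤ n ^ max C D + n ^ max C D :=
        add_le_add (hfn.trans (Nat.pow_le_pow_right (by omega) (le_max_left _ _)))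
          (hgn.trans (Nat.pow_le_pow_right (by omega) (le_max_right _ _)))
    _ ≤ n ^ (max C D + 1) := by rw [pow_succ]; nlinarith [Nat.zero_le (n ^ max C D)]

lemma pow (hf : PolyBounded f) (k : ℕ) : PolyBounded fun n => f n ^ k := by
  obtain ⟨C, hC⟩ := hf
  refine ⟨C * k, ?_⟩
  filter_upwards [hC] with n hfn
  rw [pow_mul]
  exact Nat.pow_le_pow_left hfn k

lemma pair (hf : PolyBounded f) (hg : PolyBounded g) :
    PolyBounded fun n => Nat.pair (f n) (g n) := by
  refine (((hf.add hg).add (const 1)).pow 2).mono (Eventually.of_forall fun n => ?_)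
  exact (pair_lt_sq (by omega) (by omega)).le

end PolyBounded

/-- Codes below `X n` carry `m n` bits: for every code `c` and every polynomially bounded advice
`a`, each `i < 2 ^ m n` can be built into a code below `X n` that sends `z` to `c (a, i, z)`. -/
def Carries (X m : ℕ → ℕ) : Prop :=
  ∀ (c : Code) (f : ℕ → ℕ), PolyBounded f → ∀ᶠ n in atTop, ∀ a ≤ f n, ∀ i < 2 ^ m n,
    ∃ h : Code, encode h < X n ∧ ∀ z, h.eval z = c.eval (Nat.pair a (Nat.pair i z))

lemma Carries.exists_code {X m : ℕ → ℕ} (H : Carries X m) {α β σ : Type} [Primcodable α]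
    [Primcodable β] [Primcodable σ] {φ : α × ℕ × β →. σ} (hφ : Partrec φ) {f : ℕ → ℕ}
    (hf : PolyBounded f) : ∀ᶠ n in atTop, ∀ a : α, encode a ≤ f n → ∀ i < 2 ^ m n,
      ∃ h : Code, encode h < X n ∧ ∀ z, h.eval (encode z) = (φ (a, i, z)).map encode := by
  obtain ⟨c, hc⟩ := exists_code_of_partrec hφ
  filter_upwards [H c f hf] with n h a ha i hi
  obtain ⟨u, hu, hu'⟩ := h (encode a) ha i hi
  exact ⟨u, hu, fun z => (hu' (encode z)).trans (hc (a, i, z))⟩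

lemma Carries.exists_code_of_computable {X m : ℕ → ℕ} (H : Carries X m) {β σ : Type}
    [Primcodable β] [Primcodable σ] {φ : ℕ × β → σ} (hφ : Computable φ) :
    ∀ᶠ n in atTop, ∀ i < 2 ^ m n,
      ∃ h : Code, encode h < X n ∧ ∀ z, h.eval (encode z) = Part.some (encode (φ (i, z))) := by
  have hφ' : Partrec fun p : Unit × ℕ × β => (Part.some (φ p.2) : Part σ) :=
    (hφ.comp Computable.snd).partrec
  filter_upwards [H.exists_code hφ' (PolyBounded.const 0)] with n h i hi
  simpa only [Part.map_some] using h () le_rfl i hi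

lemma map_encode_nat (p : Part ℕ) : p.map encode = p := Part.map_id' (fun _ => rfl) p

lemma carries_zero {X : ℕ → ℕ} (hX : ∀ f, PolyBounded f → ∀ᶠ n in atTop, f n ≤ X n) :
    Carries X fun _ => 0 := by
  obtain ⟨D, hconst⟩ := exists_const_code
  intro c f hf
  have hc : Partrec fun p : ℕ × ℕ => c.eval (Nat.pair p.1 (Nat.pair 0 p.2)) :=
    Code.eval_part.comp (Computable.const c) (Primrec₂.natPair.comp Primrec.fst
      (Primrec₂.natPair.comp (Primrec.const 0) Primrec.snd)).to_comp
  obtain ⟨d, hd⟩ := exists_code_of_partrec hc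
  have hbound : PolyBounded fun n => 4 * ((f n + 2) ^ D + (encode d + 1)) ^ 2 + 3 :=
    ((PolyBounded.const 4).mul ((((hf.add (.const 2)).pow D).add (.const _)).pow 2)).add (.const 3)
  filter_upwards [hX _ hbound] with n hn a ha i hi
  obtain rfl : i = 0 := by simpa using hi
  obtain ⟨u, hu, hu'⟩ := hconst a
  have hule : (a + 2) ^ D ≤ (f n + 2) ^ D := Nat.pow_le_pow_left (by omega) D
  refine ⟨Code.comp d u, encode_comp_lt (by omega) (by omega) hn, fun z => ?_⟩
  rw [eval_comp_of (hu' z)]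
  exact (hd (a, z)).trans (map_encode_nat _)

/-- The number whose lowest `p` binary digits are `i < 2 ^ p`, followed by those of `j`. -/
def glue (p i j : ℕ) : ℕ := i + 2 ^ p * j

lemma exists_glue_eq {p q r i : ℕ} (hi : i < 2 ^ r) (hr : r = p + q) :
    ∃ j < 2 ^ p, ∃ k < 2 ^ q, glue p j k = i := by
  rw [hr, pow_add] at hi
  exact ⟨i % 2 ^ p, Nat.mod_lt _ (by positivity), i / 2 ^ p, Nat.div_lt_of_lt_mul hi,
    Nat.mod_add_div _ _⟩

lemma primrec_two_pow : Primrec fun n : ℕ => 2 ^ n :=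
  (Primrec₂.unpaired'.1 Nat.Primrec.pow).comp (Primrec.const 2) Primrec.id

lemma primrec_glue {α : Type} [Primcodable α] {p f g : α → ℕ} (hp : Primrec p) (hf : Primrec f)
    (hg : Primrec g) : Primrec fun a => glue (p a) (f a) (g a) :=
  Primrec.nat_add.comp hf (Primrec.nat_mul.comp (primrec_two_pow.comp hp) hg)

-- The first code of a composition hands its bits on to the second one, which knows where to glue.
lemma Carries.double {X Y m : ℕ → ℕ} (H : Carries X m)
    (hXY : ∀ᶠ n in atTop, 4 * X n ^ 2 + 3 ≤ Y n) (hm : PolyBounded m) :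
    Carries Y fun n => 2 * m n := by
  intro c f hf
  have hφ : Partrec fun p : (ℕ × ℕ) × ℕ × ℕ × ℕ =>
      c.eval (Nat.pair p.1.1 (Nat.pair (glue p.1.2 p.2.2.1 p.2.1) p.2.2.2)) := by
    refine Code.eval_part.comp (Computable.const c) (Primrec₂.natPair.comp
      (Primrec.fst.comp Primrec.fst) (Primrec₂.natPair.comp (primrec_glue ?_ ?_ ?_) ?_)).to_comp
    · exact Primrec.snd.comp Primrec.fst
    · exact Primrec.fst.comp (Primrec.snd.comp Primrec.snd)
    · exact Primrec.fst.comp Primrec.snd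
    · exact Primrec.snd.comp (Primrec.snd.comp Primrec.snd)
  filter_upwards [H.exists_code_of_computable (Computable.id (α := ℕ × ℕ)),
    H.exists_code hφ (hf.pair hm), hXY] with n hlow hhigh hn a ha i hi
  obtain ⟨j, hj, k, hk, rfl⟩ := exists_glue_eq hi (two_mul _)
  obtain ⟨u, hu, hu'⟩ := hlow j hj
  obtain ⟨v, hv, hv'⟩ := hhigh (a, m n) (pair_le_pair ha le_rfl) k hk
  refine ⟨Code.comp v u, encode_comp_lt hv hu hn, fun z => ?_⟩
  refine (eval_comp_of (hu' z)).trans ?_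
  exact (hv' (j, z)).trans (map_encode_nat _)

lemma Carries.iterate_double {X : ℕ → ℕ → ℕ} {m : ℕ → ℕ} {J : ℕ} (H : Carries (X 0) m)
    (hX : ∀ j < J, ∀ᶠ n in atTop, 4 * X j n ^ 2 + 3 ≤ X (j + 1) n) (hm : PolyBounded m) :
    ∀ j ≤ J, Carries (X j) fun n => 2 ^ j * m n := by
  intro j
  induction j with
  | zero => simpa using H
  | succ j ih =>
    intro hj
    simpa only [pow_succ', mul_assoc] using
      (ih (by omega)).double (hX j (by omega)) ((PolyBounded.const _).mul hm)

/-! ### Strategies that tell codes apart -/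

lemma eventually_evaln_eq {c : Code} {y v : ℕ} (h : c.eval y = Part.some v) :
    ∀ᶠ τ in atTop, Code.evaln τ c y = some v := by
  obtain ⟨τ, hτ⟩ := Code.evaln_complete.1 (Part.eq_some_iff.1 h)
  filter_upwards [eventually_ge_atTop τ] with τ' hle using Code.evaln_mono hle hτ

/-- The query `y` is answered within time `τ` by all codes of `l`, and not unanimously if `l` has
more than one entry. -/
def IsQuery (τ : ℕ) (l : List Code) (y : ℕ) : Prop :=
  (∀ c ∈ l, Code.evaln τ c y ≠ none) ∧
    (l.length ≤ 1 ∨ ∃ c ∈ l, ∃ d ∈ l, Code.evaln τ c y ≠ Code.evaln τ d y)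

lemma SeqSeparable.exists_query {S T : Finset Code} (hS : SeqSeparable S) (h2 : 2 ≤ S.card)
    (hT : T ⊆ S) : ∃ y, (∀ c ∈ T, (c.eval y).Dom) ∧
      (T.card ≤ 1 ∨ ∃ c ∈ T, ∃ d ∈ T, c.eval y ≠ d.eval y) := by
  have hsplit : ∀ U ⊆ S, 2 ≤ U.card → ∃ y, (∀ c ∈ U, (c.eval y).Dom) ∧
      ∃ c ∈ U, ∃ d ∈ U, c.eval y ≠ d.eval y := fun U hU hcard => by
    obtain ⟨c, hc⟩ := Finset.card_pos.1 (show 0 < U.card by omega)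
    have hdis := hS U hU hcard
    simp only [Agree, not_forall, not_exists] at hdis
    obtain ⟨y, hdom, hne⟩ := hdis
    obtain ⟨d, hd, hcd⟩ := hne ((c.eval y).get (hdom c hc))
    refine ⟨y, hdom, d, hd, c, hc, fun heq => hcd (heq.trans ?_)⟩
    exact (Part.some_get _).symm
  rcases le_or_gt T.card 1 with hsmall | hlarge
  · obtain ⟨y, hdom, -⟩ := hsplit S subset_rfl h2
    exact ⟨y, fun c hc => hdom c (hT hc), Or.inl hsmall⟩
  · obtain ⟨y, hdom, hne⟩ := hsplit T hT hlarge
    exact ⟨y, hdom, Or.inr hne⟩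

lemma SeqSeparable.exists_time {S : Finset Code} (hS : SeqSeparable S) (h2 : 2 ≤ S.card) :
    ∃ τ, ∀ l : List Code, l.Nodup → (∀ c ∈ l, c ∈ S) → ∃ y ≤ τ, IsQuery τ l y := by
  classical
  have hev : ∀ T ∈ S.powerset, ∀ᶠ τ in atTop, ∃ y ≤ τ, (∀ c ∈ T, Code.evaln τ c y ≠ none) ∧
      (T.card ≤ 1 ∨ ∃ c ∈ T, ∃ d ∈ T, Code.evaln τ c y ≠ Code.evaln τ d y) := by
    intro T hT
    obtain ⟨y, hdom, hne⟩ := hS.exists_query h2 (Finset.mem_powerset.1 hT)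
    choose! v hv using fun c hc => Part.dom_iff_mem.1 (hdom c hc)
    have hv' : ∀ c ∈ T, c.eval y = Part.some (v c) := fun c hc => Part.eq_some_iff.2 (hv c hc)
    filter_upwards [(eventually_all_finset T).2 fun c hc => eventually_evaln_eq (hv' c hc),
      eventually_ge_atTop y] with τ hτ hyτ
    refine ⟨y, hyτ, fun c hc => by simp [hτ c hc], hne.imp_right ?_⟩
    rintro ⟨c, hc, d, hd, hcd⟩
    refine ⟨c, hc, d, hd, fun heq => hcd ?_⟩
    rw [hτ c hc, hτ d hd, Option.some_inj] at heq
    rw [hv' c hc, hv' d hd, heq]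
  obtain ⟨τ, hτ⟩ := ((eventually_all_finset _).2 hev).exists
  refine ⟨τ, fun l hl hlS => ?_⟩
  simpa only [IsQuery, List.mem_toFinset, List.toFinset_card_of_nodup hl] using
    hτ l.toFinset (Finset.mem_powerset.2 fun c hc => hlS c (List.mem_toFinset.1 hc))

/-- A strategy for telling the codes of a list apart: a time bound for the answers, and the list.
It keeps track of the sublist of the codes that are consistent with the answers so far. -/
abbrev Strategy : Type := ℕ × List Code

namespace Strategy

/-- The time allowed for each answer. -/
def time (w : Strategy) : ℕ := w.1

/-- The codes to be told apart. -/
def codes (w : Strategy) : List Code := w.2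

open Classical in
/-- The query asked when the codes of `l` are left. -/
noncomputable def query (w : Strategy) (l : List Code) : ℕ :=
  Nat.findGreatest (IsQuery w.time l) w.time

/-- The codes of `l` that answer the query by `v`. -/
noncomputable def next (w : Strategy) (l : List Code) (v : ℕ) : List Code :=
  l.filter fun c => Code.evaln w.time c (w.query l) = some v

/-- The codes that are left after `t` rounds against `c`. -/
noncomputable def run (w : Strategy) (c : Code) : ℕ → Option (List Code)
  | 0 => some w.codes
  | t + 1 => (w.run c t).bind fun l => (Code.evaln w.time c (w.query l)).map (w.next l)

open Classical in
/-- The index, in the list of codes, of the code that is left at the end. -/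
noncomputable def position (w : Strategy) (l : List Code) : ℕ := w.codes.idxOf l.headI

/-- The strategy can be run against `2 ^ ℓ` codes below `X`, and identifies them by numbers. -/
def Identifies (w : Strategy) (X ℓ : ℕ) : Prop :=
  ∀ i < 2 ^ ℓ, ∃ c ∈ w.codes, encode c < X ∧
    (w.run c (w.codes.length + 1)).map w.position = some i

lemma run_succ_eq_some {w : Strategy} {c : Code} {t : ℕ} {u : List Code} :
    w.run c (t + 1) = some u ↔ ∃ l, w.run c t = some l ∧
      ∃ v, Code.evaln w.time c (w.query l) = some v ∧ w.next l v = u := by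
  simp only [run, Option.bind_eq_some_iff, Option.map_eq_some_iff]

lemma exists_run_eq_some {w : Strategy} (hw : ∀ l, l.Sublist w.codes → ∃ y ≤ w.time,
    IsQuery w.time l y) {c : Code} (hc : c ∈ w.codes) (t : ℕ) : ∃ l, w.run c t = some l ∧
      l.Sublist w.codes ∧ c ∈ l ∧ l.length ≤ max 1 (w.codes.length - t) := by
  induction t with
  | zero => exact ⟨w.codes, rfl, List.Sublist.refl _, hc, le_max_right _ _⟩
  | succ t ih =>
    obtain ⟨l, hrun, hsub, hcl, hlen⟩ := ih
    obtain ⟨y, hy, hquery⟩ := hw l hsub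
    obtain ⟨hsome, hsplit⟩ : IsQuery w.time l (w.query l) := by
      classical exact Nat.findGreatest_spec hy hquery
    obtain ⟨v, hv⟩ := Option.ne_none_iff_exists'.1 (hsome c hcl)
    refine ⟨w.next l v, run_succ_eq_some.2 ⟨l, hrun, v, hv, rfl⟩, List.filter_sublist.trans hsub,
      List.mem_filter.2 ⟨hcl, decide_eq_true hv⟩, ?_⟩
    have hle : (w.next l v).length ≤ l.length := List.length_filter_le _ _
    rcases hsplit with hone | ⟨d, hd, e, he, hne⟩
    · exact (hle.trans hone).trans (le_max_left _ _)
    · have hlt : (w.next l v).length < l.length := by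
        refine hle.lt_of_ne fun heq => hne ?_
        have hall := List.length_filter_eq_length_iff.1 heq
        rw [of_decide_eq_true (hall d hd), of_decide_eq_true (hall e he)]
      omega

end Strategy

lemma SeqSeparable.exists_identifies {S : Finset Code} {X ℓ : ℕ} (hS : SeqSeparable S)
    (hℓ : 1 ≤ ℓ) (hcard : S.card = 2 ^ ℓ) (hX : ∀ c ∈ S, encode c < X) :
    ∃ w : Strategy, w.Identifies X ℓ := by
  obtain ⟨τ, hτ⟩ := hS.exists_time (hcard ▸ Nat.le_self_pow (by omega) 2)
  have hw : ∀ l, l.Sublist S.toList → ∃ y ≤ τ, IsQuery τ l y := fun l hl =>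
    hτ l (S.nodup_toList.sublist hl) fun c hc => Finset.mem_toList.1 (hl.subset hc)
  refine ⟨(τ, S.toList), fun i hi => ?_⟩
  have hi' : i < S.toList.length := by rwa [Finset.length_toList, hcard]
  have hmem : S.toList[i] ∈ S.toList := List.getElem_mem hi'
  obtain ⟨l, hrun, -, hcl, hlen⟩ := Strategy.exists_run_eq_some (w := (τ, S.toList)) hw hmem
    (S.toList.length + 1)
  refine ⟨_, hmem, hX _ (Finset.mem_toList.1 hmem), Option.map_eq_some_iff.2 ⟨l, hrun, ?_⟩⟩
  obtain ⟨d, rfl⟩ : ∃ d, l = [d] := List.length_eq_one_iff.1 (le_antisymm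
    (hlen.trans (by simp [Strategy.codes])) (List.length_pos_of_mem hcl))
  rw [← List.mem_singleton.1 hcl]
  classical exact S.nodup_toList.idxOf_getElem i hi'

lemma exists_identifies_of_le_capacity {X ℓ : ℕ} (hℓ : 1 ≤ ℓ) (h : 2 ^ ℓ ≤ capacity X) :
    ∃ w : Strategy, w.Identifies X ℓ := by
  obtain ⟨S, hS, hsep, hc⟩ := exists_seqSeparable_card_eq (codesBelow X)
  obtain ⟨S', hS', hc'⟩ := Finset.exists_subset_card_eq (h.trans hc.ge)
  exact (hsep.mono hS').exists_identifies hℓ hc' fun c hcS => mem_codesBelow.1 (hS (hS' hcS))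

lemma primrec_evaln_comp {α : Type} [Primcodable α] {f : α → ℕ} {g : α → Code} {h : α → ℕ}
    (hf : Primrec f) (hg : Primrec g) (hh : Primrec h) :
    Primrec fun a => Code.evaln (f a) (g a) (h a) :=
  Code.primrec_evaln.comp ((hf.pair hg).pair hh)

lemma primrecPred_isQuery : PrimrecPred fun p : ℕ × List Code × ℕ => IsQuery p.1 p.2.1 p.2.2 := by
  have hanswer : Primrec₂ fun (c : Code) (p : ℕ × List Code × ℕ) => Code.evaln p.1 c p.2.2 :=
    primrec_evaln_comp (Primrec.fst.comp Primrec.snd) Primrec.fst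
      (Primrec.snd.comp (Primrec.snd.comp Primrec.snd))
  have hlist : Primrec fun p : ℕ × List Code × ℕ => p.2.1 := Primrec.fst.comp Primrec.snd
  have hsome : PrimrecRel fun (c : Code) (p : ℕ × List Code × ℕ) =>
      Code.evaln p.1 c p.2.2 ≠ none := (Primrec.eq.comp hanswer (Primrec.const none)).not
  have hne : PrimrecRel fun (d : Code) (q : Code × ℕ × List Code × ℕ) =>
      Code.evaln q.2.1 q.1 q.2.2.2 ≠ Code.evaln q.2.1 d q.2.2.2 :=
    (Primrec.eq.comp (hanswer.comp (Primrec.fst.comp Primrec.snd) (Primrec.snd.comp Primrec.snd))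
      (hanswer.comp Primrec.fst (Primrec.snd.comp Primrec.snd))).not
  have hsplit : PrimrecRel fun (c : Code) (p : ℕ × List Code × ℕ) =>
      ∃ d ∈ p.2.1, Code.evaln p.1 c p.2.2 ≠ Code.evaln p.1 d p.2.2 :=
    hne.exists_mem_list.comp (hlist.comp Primrec.snd) Primrec.id
  have hlength : PrimrecPred fun p : ℕ × List Code × ℕ => p.2.1.length ≤ 1 :=
    Primrec.nat_le.comp (Primrec.list_length.comp hlist) (Primrec.const 1)
  exact (hsome.forall_mem_list.comp hlist Primrec.id).and
    (hlength.or (hsplit.exists_mem_list.comp hlist Primrec.id))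

namespace Strategy

lemma primrec_query : Primrec₂ query := by
  classical
  have htime : Primrec fun p : Strategy × List Code => p.1.time := Primrec.fst.comp Primrec.fst
  have hquery : PrimrecRel fun (p : Strategy × List Code) y => IsQuery p.1.time p.2 y :=
    primrecPred_isQuery.comp ((htime.comp Primrec.fst).pair
      ((Primrec.snd.comp Primrec.fst).pair Primrec.snd))
  exact Primrec.nat_findGreatest htime hquery

lemma primrec_next : Primrec fun p : Strategy × List Code × ℕ => p.1.next p.2.1 p.2.2 := by
  classical
  have hrel : PrimrecRel fun (c : Code) (p : Strategy × List Code × ℕ) =>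
      Code.evaln p.1.time c (p.1.query p.2.1) = some p.2.2 := by
    have hw : Primrec fun q : Code × Strategy × List Code × ℕ => q.2.1 :=
      Primrec.fst.comp Primrec.snd
    refine Primrec.eq.comp (primrec_evaln_comp (Primrec.fst.comp hw) Primrec.fst
      (primrec_query.comp hw ?_)) (Primrec.option_some.comp ?_)
    · exact Primrec.fst.comp (Primrec.snd.comp Primrec.snd)
    · exact Primrec.snd.comp (Primrec.snd.comp Primrec.snd)
  exact (hrel.listFilter.comp (Primrec.fst.comp Primrec.snd) Primrec.id).of_eq fun p => by
    simp only [next, id]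

lemma primrec_run : Primrec fun p : Strategy × Code × ℕ => p.1.run p.2.1 p.2.2 := by
  have hw : Primrec fun q : ((Strategy × Code × ℕ) × ℕ × Option (List Code)) × List Code =>
      q.1.1.1 := Primrec.fst.comp (Primrec.fst.comp Primrec.fst)
  have hanswer : Primrec fun q : ((Strategy × Code × ℕ) × ℕ × Option (List Code)) × List Code =>
      Code.evaln q.1.1.1.time q.1.1.2.1 (q.1.1.1.query q.2) :=
    primrec_evaln_comp (Primrec.fst.comp hw)
      (Primrec.fst.comp (Primrec.snd.comp (Primrec.fst.comp Primrec.fst)))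
      (primrec_query.comp hw Primrec.snd)
  have hnext : Primrec₂ fun (q : ((Strategy × Code × ℕ) × ℕ × Option (List Code)) × List Code)
      v => q.1.1.1.next q.2 v :=
    (primrec_next.comp ((hw.comp Primrec.fst).pair
      ((Primrec.snd.comp Primrec.fst).pair Primrec.snd))).to₂
  have hstep : Primrec₂ fun (p : Strategy × Code × ℕ) (q : ℕ × Option (List Code)) =>
      q.2.bind fun l => (Code.evaln p.1.time p.2.1 (p.1.query l)).map (p.1.next l) :=
    Primrec.option_bind (Primrec.snd.comp Primrec.snd) (Primrec.option_map hanswer hnext).to₂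
  have hstart : Primrec fun p : Strategy × Code × ℕ => some p.1.codes :=
    Primrec.option_some.comp (Primrec.snd.comp Primrec.fst)
  refine (Primrec.nat_rec' (Primrec.snd.comp Primrec.snd) hstart hstep).of_eq fun ⟨w, c, t⟩ => ?_
  induction t with
  | zero => rfl
  | succ t ih => exact congrArg (Option.bind · _) ih

lemma primrec_position : Primrec₂ position := by
  classical
  exact Primrec.list_idxOf.comp (Primrec.list_headI.comp Primrec.snd)
    (Primrec.snd.comp Primrec.fst)

lemma primrecPred_identifies :
    PrimrecPred fun p : (ℕ × ℕ) × Strategy => p.2.Identifies p.1.1 p.1.2 := by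
  have hcode : PrimrecRel fun (c : Code) (q : ℕ × (ℕ × ℕ) × Strategy) => encode c < q.2.1.1 ∧
      (q.2.2.run c (q.2.2.codes.length + 1)).map q.2.2.position = some q.1 := by
    have hw : Primrec fun r : Code × ℕ × (ℕ × ℕ) × Strategy => r.2.2.2 :=
      Primrec.snd.comp (Primrec.snd.comp Primrec.snd)
    have hrounds : Primrec fun r : Code × ℕ × (ℕ × ℕ) × Strategy => r.2.2.2.codes.length + 1 :=
      Primrec.succ.comp (Primrec.list_length.comp (Primrec.snd.comp hw))
    have hlt : PrimrecPred fun r : Code × ℕ × (ℕ × ℕ) × Strategy => encode r.1 < r.2.2.1.1 :=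
      Primrec.nat_lt.comp (Primrec.encode.comp Primrec.fst)
        (Primrec.fst.comp (Primrec.fst.comp (Primrec.snd.comp Primrec.snd)))
    have hrun : Primrec fun r : Code × ℕ × (ℕ × ℕ) × Strategy =>
        r.2.2.2.run r.1 (r.2.2.2.codes.length + 1) :=
      (primrec_run.comp (hw.pair (Primrec.fst.pair hrounds)) :)
    have hposition : Primrec fun q : (Code × ℕ × (ℕ × ℕ) × Strategy) × List Code =>
        q.1.2.2.2.position q.2 := primrec_position.comp (hw.comp Primrec.fst) Primrec.snd
    have hindex := Primrec.option_map hrun hposition.to₂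
    exact hlt.and (Primrec.eq.comp hindex
      (Primrec.option_some.comp (Primrec.fst.comp Primrec.snd)))
  have hindex : PrimrecRel fun (i : ℕ) (p : (ℕ × ℕ) × Strategy) => ∃ c ∈ p.2.codes,
      encode c < p.1.1 ∧ (p.2.run c (p.2.codes.length + 1)).map p.2.position = some i :=
    hcode.exists_mem_list.comp (Primrec.snd.comp (Primrec.snd.comp Primrec.snd)) Primrec.id
  refine (hindex.forall_mem_list.comp (Primrec.list_range.comp (primrec_two_pow.comp
    (Primrec.snd.comp Primrec.fst))) Primrec.id).of_eq fun p => ?_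
  simp only [List.mem_range, id, Identifies]

end Strategy

lemma exists_partrec_search {α W : Type} [Primcodable α] [Primcodable W] {R : α → W → Prop}
    (hR : PrimrecRel R) :
    ∃ σ : α →. W, Partrec σ ∧ ∀ a, (∃ w, R a w) → ∃ w, R a w ∧ σ a = Part.some w := by
  classical
  have hsearch : Primrec₂ fun (a : α) (k : ℕ) =>
      (decode k : Option W).bind fun w => if R a w then some w else none :=
    Primrec.option_bind (Primrec.decode.comp Primrec.snd) (Primrec.ite
      (hR.comp (Primrec.fst.comp Primrec.fst) Primrec.snd)
      (Primrec.option_some.comp Primrec.snd) (Primrec.const none))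
  refine ⟨_, Partrec.rfindOpt hsearch.to_comp, fun a ⟨w, hw⟩ => ?_⟩
  have hfound : (Nat.rfindOpt fun k =>
      (decode k : Option W).bind fun w => if R a w then some w else none).Dom :=
    Nat.rfindOpt_dom.2 ⟨encode w, w, by simp [encodek, hw]⟩
  have hmem := Part.get_mem hfound
  obtain ⟨k, hk⟩ := Nat.rfindOpt_spec hmem
  obtain ⟨w', -, hw'⟩ := Option.bind_eq_some_iff.1 hk
  obtain ⟨hRw', heq⟩ := Option.ite_none_right_eq_some.1 hw'
  exact ⟨w', hRw', Part.eq_some_iff.2 (Option.some.inj heq ▸ hmem)⟩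

lemma exists_partrec_identifies {X : ℕ → ℕ} (hX : Primrec X) :
    ∃ σ : ℕ × ℕ →. Strategy, Partrec σ ∧ ∀ p : ℕ × ℕ, (∃ w : Strategy, w.Identifies (X p.1) p.2) →
      ∃ w : Strategy, w.Identifies (X p.1) p.2 ∧ σ p = Part.some w :=
  exists_partrec_search (Strategy.primrecPred_identifies.comp
    (((hX.comp (Primrec.fst.comp Primrec.fst)).pair (Primrec.snd.comp Primrec.fst)).pair
      Primrec.snd))

/-! ### Identified codes carry extra bits -/

/-- The data carried along while a strategy is run: the codes that are left, three blocks of bits,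
and the input of the whole program. -/
abbrev Record : Type := List Code × ℕ × ℕ × ℕ × ℕ

/-- The state of a run: the last answer, the record (`none` before the first query), and a block of
bits. -/
abbrev RunState : Type := ℕ × Option Record × ℕ

namespace Strategy

/-- The record for the next query, from a block of bits `i₁` and the input `x` of a step of the
recursion, which is a pair of another block of bits and the program's input, a counter, and the
state. -/
noncomputable def nextRecord (w : Strategy) (i₁ : ℕ) (x : (ℕ × ℕ) × ℕ × RunState) : Record :=
  x.2.2.2.1.elim (w.codes, i₁, x.2.2.2.2, x.1) fun s => (w.next s.1 x.2.2.1, s.2)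

/-- The next query together with its record. -/
noncomputable def ask (w : Strategy) (i₁ : ℕ) (x : (ℕ × ℕ) × ℕ × RunState) : ℕ × Option Record :=
  (w.query (w.nextRecord i₁ x).1, some (w.nextRecord i₁ x))

/-- The argument of the code that is to be run at the end: all the blocks of bits, including the
number of the identified code, glued together, with the advice and the input. The parameters
`q = (a, m, b, ℓ)` consist of the advice `a`, the length `m` of the first block, and the key
`(b, ℓ)` from which the strategy is computed. -/
noncomputable def output (w : Strategy) (q : ℕ × ℕ × ℕ × ℕ) (i₄ : ℕ) (x : RunState) : ℕ :=
  let s := x.2.1.getD ([], 0, 0, 0, 0)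
  Nat.pair q.1 (Nat.pair (glue q.2.2.2 (w.position (w.next s.1 x.1)) (glue q.2.1 x.2.2
    (glue (2 * q.2.1) s.2.1 (glue (4 * q.2.1) s.2.2.1 (glue (8 * q.2.1) s.2.2.2.1 i₄)))))
      s.2.2.2.2)

lemma primrec_nextRecord :
    Primrec fun p : Strategy × ℕ × (ℕ × ℕ) × ℕ × RunState => p.1.nextRecord p.2.1 p.2.2 := by
  have hstate : Primrec fun p : Strategy × ℕ × (ℕ × ℕ) × ℕ × RunState => p.2.2.2.2 :=
    Primrec.snd.comp (Primrec.snd.comp (Primrec.snd.comp Primrec.snd))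
  have hnone : Primrec fun p : Strategy × ℕ × (ℕ × ℕ) × ℕ × RunState =>
      (p.1.codes, p.2.1, p.2.2.2.2.2.2, p.2.2.1) :=
    (Primrec.snd.comp Primrec.fst).pair ((Primrec.fst.comp Primrec.snd).pair
      ((Primrec.snd.comp (Primrec.snd.comp hstate)).pair
        (Primrec.fst.comp (Primrec.snd.comp Primrec.snd))))
  have hnext : Primrec fun q : (Strategy × ℕ × (ℕ × ℕ) × ℕ × RunState) × Record =>
      q.1.1.next q.2.1 q.1.2.2.2.2.1 :=
    primrec_next.comp ((Primrec.fst.comp Primrec.fst).pair ((Primrec.fst.comp Primrec.snd).pair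
      (Primrec.fst.comp (hstate.comp Primrec.fst))))
  refine (Primrec.option_casesOn (Primrec.fst.comp (Primrec.snd.comp hstate)) hnone
    (hnext.pair (Primrec.snd.comp Primrec.snd)).to₂).of_eq fun p => ?_
  cases h : p.2.2.2.2.2.1 <;> simp only [nextRecord, h, Option.elim]

lemma primrec_ask :
    Primrec fun p : Strategy × ℕ × (ℕ × ℕ) × ℕ × RunState => p.1.ask p.2.1 p.2.2 :=
  (primrec_query.comp Primrec.fst (Primrec.fst.comp primrec_nextRecord)).pair
    (Primrec.option_some.comp primrec_nextRecord)

lemma primrec_output :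
    Primrec fun p : Strategy × (ℕ × ℕ × ℕ × ℕ) × ℕ × RunState =>
      p.1.output p.2.1 p.2.2.1 p.2.2.2 := by
  have hq : Primrec fun p : Strategy × (ℕ × ℕ × ℕ × ℕ) × ℕ × RunState => p.2.1 :=
    Primrec.fst.comp Primrec.snd
  have hx : Primrec fun p : Strategy × (ℕ × ℕ × ℕ × ℕ) × ℕ × RunState => p.2.2.2 :=
    Primrec.snd.comp (Primrec.snd.comp Primrec.snd)
  have hs : Primrec fun p : Strategy × (ℕ × ℕ × ℕ × ℕ) × ℕ × RunState =>
      p.2.2.2.2.1.getD ([], 0, 0, 0, 0) :=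
    Primrec.option_getD.comp (Primrec.fst.comp (Primrec.snd.comp hx)) (Primrec.const _)
  have hm (k : ℕ) : Primrec fun p : Strategy × (ℕ × ℕ × ℕ × ℕ) × ℕ × RunState => k * p.2.1.2.1 :=
    Primrec.nat_mul.comp (Primrec.const k) (Primrec.fst.comp (Primrec.snd.comp hq))
  have hpos : Primrec fun p : Strategy × (ℕ × ℕ × ℕ × ℕ) × ℕ × RunState =>
      p.1.position (p.1.next (p.2.2.2.2.1.getD ([], 0, 0, 0, 0)).1 p.2.2.2.1) :=
    primrec_position.comp Primrec.fst
      (primrec_next.comp (Primrec.fst.pair ((Primrec.fst.comp hs).pair (Primrec.fst.comp hx))))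
  exact Primrec₂.natPair.comp (Primrec.fst.comp hq) (Primrec₂.natPair.comp
    (primrec_glue (Primrec.snd.comp (Primrec.snd.comp (Primrec.snd.comp hq))) hpos
      (primrec_glue (Primrec.fst.comp (Primrec.snd.comp hq))
        (Primrec.snd.comp (Primrec.snd.comp hx))
        (primrec_glue (hm 2) (Primrec.fst.comp (Primrec.snd.comp hs))
          (primrec_glue (hm 4) (Primrec.fst.comp (Primrec.snd.comp (Primrec.snd.comp hs)))
            (primrec_glue (hm 8)
              (Primrec.fst.comp (Primrec.snd.comp (Primrec.snd.comp (Primrec.snd.comp hs))))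
              (Primrec.fst.comp (Primrec.snd.comp Primrec.snd)))))))
    (Primrec.snd.comp (Primrec.snd.comp (Primrec.snd.comp (Primrec.snd.comp hs)))))

end Strategy

/-- The step function of a primitive recursion that starts with the answer of a code: keeps the
answer `r`, stores the counter, and adds a block of bits `i₀`. -/
def tag (p : ℕ × ℕ × ℕ × ℕ) : ℕ × ℕ × ℕ :=
  (if p.2.2.1 = 0 then p.2.2.2 else p.2.2.2.unpair.1, p.2.2.1 + 1, p.1)

lemma primrec_tag : Primrec tag := by
  have hk : Primrec fun p : ℕ × ℕ × ℕ × ℕ => p.2.2.1 :=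
    Primrec.fst.comp (Primrec.snd.comp Primrec.snd)
  have hr : Primrec fun p : ℕ × ℕ × ℕ × ℕ => p.2.2.2 :=
    Primrec.snd.comp (Primrec.snd.comp Primrec.snd)
  exact (Primrec.ite (Primrec.eq.comp hk (Primrec.const 0)) hr
    (Primrec.fst.comp (Primrec.unpair.comp hr))).pair ((Primrec.succ.comp hk).pair Primrec.fst)

-- The counter of the recursion carries arbitrary data past the code `Q`.
lemma eval_prec_tag {Q h₀ : Code} {i₀ y r : ℕ}
    (h : ∀ q : ℕ × ℕ × ℕ, h₀.eval (encode q) = Part.some (encode (tag (i₀, q))))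
    (hQ : Q.eval y = Part.some r) (k : ℕ) :
    (Code.prec Q h₀).eval (Nat.pair y (k + 1)) = Part.some (encode (r, k + 1, i₀)) := by
  induction k with
  | zero => exact (eval_prec_succ_of ((Code.eval_prec_zero Q h₀ y).trans hQ)).trans (h (y, 0, r))
  | succ k ih =>
    refine (eval_prec_succ_of ih).trans ((h (y, k + 1, encode (r, k + 1, i₀))).trans ?_)
    simp [tag]

/-- The code that runs a strategy against `Q`, provided that `h₀` computes `tag`, `h₁` computes
`Strategy.ask`, `h₂` is the initial state, and `h₃` computes the number of rounds; then `h₄` is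
applied to the final state. -/
def runner (Q h₀ h₁ h₂ h₃ h₄ : Code) : Code :=
  .comp h₄ (.comp (.prec h₂ (.comp (.prec Q h₀) h₁)) h₃)

lemma exists_eval_prec_ask {w : Strategy} {Q h₀ h₁ h₂ : Code} {i₀ i₁ i₂ : ℕ} {A : ℕ × ℕ}
    (H₀ : ∀ q : ℕ × ℕ × ℕ, h₀.eval (encode q) = Part.some (encode (tag (i₀, q))))
    (H₁ : ∀ x, h₁.eval (encode x) = Part.some (encode (w.ask i₁ x)))
    (H₂ : h₂.eval (encode A) = Part.some (encode ((0, none, i₂) : RunState))) (t : ℕ)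
    {u : List Code} (hrun : w.run Q (t + 1) = some u) : ∃ l v, u = w.next l v ∧
      (Code.prec h₂ (.comp (.prec Q h₀) h₁)).eval (Nat.pair (encode A) (t + 1)) =
        Part.some (encode ((v, some (l, i₁, i₂, A), i₀) : RunState)) := by
  have hround : ∀ (t : ℕ) (x : RunState) (l : List Code) (v : ℕ),
      (Code.prec h₂ (.comp (.prec Q h₀) h₁)).eval (Nat.pair (encode A) t) = Part.some (encode x) →
      w.nextRecord i₁ (A, t, x) = (l, i₁, i₂, A) → Code.evaln w.time Q (w.query l) = some v →
      (Code.prec h₂ (.comp (.prec Q h₀) h₁)).eval (Nat.pair (encode A) (t + 1)) =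
        Part.some (encode ((v, some (l, i₁, i₂, A), i₀) : RunState)) := by
    intro t x l v hx hrecord hv
    have hask := H₁ (A, t, x)
    rw [Strategy.ask, hrecord] at hask
    refine (eval_prec_succ_of hx).trans ((eval_comp_of hask).trans ?_)
    exact eval_prec_tag H₀ (Part.eq_some_iff.2 (Code.evaln_sound hv)) _
  induction t generalizing u with
  | zero =>
    obtain ⟨l, hl, v, hv, rfl⟩ := Strategy.run_succ_eq_some.1 hrun
    obtain rfl : w.codes = l := Option.some.inj hl
    exact ⟨_, v, rfl, hround 0 _ _ v ((Code.eval_prec_zero _ _ _).trans H₂) rfl hv⟩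
  | succ t ih =>
    obtain ⟨l, hl, v, hv, rfl⟩ := Strategy.run_succ_eq_some.1 hrun
    obtain ⟨l', v', rfl, hprev⟩ := ih hl
    exact ⟨_, v, rfl, hround (t + 1) _ _ v hprev rfl hv⟩

lemma exists_eval_runner {w : Strategy} {Q h₀ h₁ h₂ h₃ h₄ : Code} {i₀ i₁ i₂ i₃ z t : ℕ}
    (H₀ : ∀ q : ℕ × ℕ × ℕ, h₀.eval (encode q) = Part.some (encode (tag (i₀, q))))
    (H₁ : ∀ x, h₁.eval (encode x) = Part.some (encode (w.ask i₁ x)))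
    (H₂ : h₂.eval (encode (i₃, z)) = Part.some (encode ((0, none, i₂) : RunState)))
    (H₃ : h₃.eval z = Part.some (encode ((i₃, z), t + 1)))
    {u : List Code} (hrun : w.run Q (t + 1) = some u) : ∃ l v, u = w.next l v ∧
      (runner Q h₀ h₁ h₂ h₃ h₄).eval z =
        h₄.eval (encode ((v, some (l, i₁, i₂, i₃, z), i₀) : RunState)) := by
  obtain ⟨l, v, hu, heval⟩ := exists_eval_prec_ask H₀ H₁ H₂ t hrun
  exact ⟨l, v, hu, eval_comp_of ((eval_comp_of H₃).trans heval)⟩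

lemma exists_glue_five_eq {m ℓ i : ℕ} (hi : i < 2 ^ (31 * m + ℓ)) :
    ∃ j < 2 ^ ℓ, ∃ i₀ < 2 ^ m, ∃ i₁ < 2 ^ (2 * m), ∃ i₂ < 2 ^ (4 * m), ∃ i₃ < 2 ^ (8 * m),
      ∃ i₄ < 2 ^ (16 * m), glue ℓ j (glue m i₀ (glue (2 * m) i₁ (glue (4 * m) i₂
        (glue (8 * m) i₃ i₄)))) = i := by
  obtain ⟨j, hj, _, hj', rfl⟩ := exists_glue_eq hi (add_comm _ _)
  obtain ⟨i₀, h₀, _, h₀', rfl⟩ := exists_glue_eq hj' (show 31 * m = m + 30 * m by ring)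
  obtain ⟨i₁, h₁, _, h₁', rfl⟩ := exists_glue_eq h₀' (show 30 * m = 2 * m + 28 * m by ring)
  obtain ⟨i₂, h₂, _, h₂', rfl⟩ := exists_glue_eq h₁' (show 28 * m = 4 * m + 24 * m by ring)
  obtain ⟨i₃, h₃, i₄, h₄, rfl⟩ := exists_glue_eq h₂' (show 24 * m = 8 * m + 16 * m by ring)
  exact ⟨j, hj, i₀, h₀, i₁, h₁, i₂, h₂, i₃, h₃, i₄, h₄, rfl⟩

lemma encode_runner_lt {Q h₀ h₁ h₂ h₃ h₄ : Code} {X : ℕ → ℕ}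
    (hX : ∀ j < 5, 4 * X j ^ 2 + 3 ≤ X (j + 1)) (hQ : encode Q < X 0) (hh₀ : encode h₀ < X 0)
    (hh₁ : encode h₁ < X 1) (hh₂ : encode h₂ < X 2) (hh₃ : encode h₃ < X 3)
    (hh₄ : encode h₄ < X 4) : encode (runner Q h₀ h₁ h₂ h₃ h₄) < X 5 :=
  have hprec := encode_prec_lt hQ hh₀ (hX 0 (by omega))
  have hask := encode_comp_lt hprec hh₁ (hX 1 (by omega))
  have hloop := encode_prec_lt hh₂ hask (hX 2 (by omega))
  encode_comp_lt hh₄ (encode_comp_lt hloop hh₃ (hX 3 (by omega))) (hX 4 (by omega))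

section

variable {X : ℕ → ℕ} {m b ℓ : ℕ → ℕ} {σ : ℕ × ℕ →. Strategy}

lemma Carries.exists_tag (H : Carries X m) : ∀ᶠ n in atTop, ∀ i₀ < 2 ^ m n,
    ∃ h : Code, encode h < X n ∧
      ∀ q : ℕ × ℕ × ℕ, h.eval (encode q) = Part.some (encode (tag (i₀, q))) :=
  H.exists_code_of_computable primrec_tag.to_comp

lemma Carries.exists_init (H : Carries X m) : ∀ᶠ n in atTop, ∀ i₂ < 2 ^ m n,
    ∃ h : Code, encode h < X n ∧
      ∀ A : ℕ × ℕ, h.eval (encode A) = Part.some (encode ((0, none, i₂) : RunState)) :=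
  H.exists_code_of_computable (φ := fun p : ℕ × ℕ × ℕ => ((0, none, p.1) : RunState))
    ((Primrec.const 0).pair ((Primrec.const none).pair Primrec.fst)).to_comp

lemma Carries.exists_ask (H : Carries X m) (hσ : Partrec σ) (hb : PolyBounded b)
    (hℓ : PolyBounded ℓ) : ∀ᶠ n in atTop, ∀ w, σ (b n, ℓ n) = Part.some w → ∀ i₁ < 2 ^ m n,
      ∃ h : Code, encode h < X n ∧
        ∀ x, h.eval (encode x) = Part.some (encode (w.ask i₁ x)) := by
  have hφ : Partrec fun p : (ℕ × ℕ) × ℕ × (ℕ × ℕ) × ℕ × RunState =>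
      (σ p.1).map fun w => w.ask p.2.1 p.2.2 :=
    (hσ.comp Computable.fst).map (Strategy.primrec_ask.to_comp.comp
      (Computable.snd.pair (Computable.snd.comp Computable.fst))).to₂
  filter_upwards [H.exists_code hφ (hb.pair hℓ)] with n h w hw i hi
  simpa only [hw, Part.map_some] using h (b n, ℓ n) le_rfl i hi

lemma Carries.exists_rounds (H : Carries X m) (hσ : Partrec σ) (hb : PolyBounded b)
    (hℓ : PolyBounded ℓ) : ∀ᶠ n in atTop, ∀ w, σ (b n, ℓ n) = Part.some w → ∀ i₃ < 2 ^ m n,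
      ∃ h : Code, encode h < X n ∧
        ∀ z : ℕ, h.eval (encode z) = Part.some (encode ((i₃, z), w.codes.length + 1)) := by
  have hφ : Partrec fun p : (ℕ × ℕ) × ℕ × ℕ =>
      (σ p.1).map fun w => ((p.2.1, p.2.2), w.codes.length + 1) :=
    (hσ.comp Computable.fst).map ((Computable.snd.comp Computable.fst).pair
      (Primrec.succ.comp (Primrec.list_length.comp (Primrec.snd.comp Primrec.snd))).to_comp).to₂
  filter_upwards [H.exists_code hφ (hb.pair hℓ)] with n h w hw i hi
  simpa only [hw, Part.map_some] using h (b n, ℓ n) le_rfl i hi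

lemma Carries.exists_output (H : Carries X m) (hσ : Partrec σ) (c : Code) {f m' : ℕ → ℕ}
    (hf : PolyBounded f) (hm' : PolyBounded m') (hb : PolyBounded b) (hℓ : PolyBounded ℓ) :
    ∀ᶠ n in atTop, ∀ w, σ (b n, ℓ n) = Part.some w → ∀ a ≤ f n, ∀ i₄ < 2 ^ m n,
      ∃ h : Code, encode h < X n ∧
        ∀ x : RunState, h.eval (encode x) = c.eval (w.output (a, m' n, b n, ℓ n) i₄ x) := by
  have hφ : Partrec fun p : (ℕ × ℕ × ℕ × ℕ) × ℕ × RunState =>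
      (σ p.1.2.2).bind fun w => c.eval (w.output p.1 p.2.1 p.2.2) :=
    (hσ.comp (Computable.snd.comp (Computable.snd.comp Computable.fst))).bind
      (Code.eval_part.comp (Computable.const c) (Strategy.primrec_output.to_comp.comp
        (Computable.snd.pair Computable.fst))).to₂
  filter_upwards [H.exists_code hφ (hf.pair (hm'.pair (hb.pair hℓ)))] with n h w hw a ha i hi
  simpa only [hw, Part.bind_some, map_encode_nat] using
    h (a, m' n, b n, ℓ n) (pair_le_pair ha le_rfl) i hi

end

-- The code `Q` identified by the strategy is a block of `ℓ` bits by itself; the other parts of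
-- the runner carry a block each.
lemma Carries.step {X : ℕ → ℕ → ℕ} {m ℓ b ξ : ℕ → ℕ} (hξ : Primrec ξ)
    (hb : ∀ᶠ n in atTop, X 0 n = ξ (b n)) (hb' : PolyBounded b) (hm : PolyBounded m)
    (hℓ : PolyBounded ℓ) (hℓ' : ∀ᶠ n in atTop, 1 ≤ ℓ n)
    (hcap : ∀ᶠ n in atTop, 2 ^ ℓ n ≤ capacity (X 0 n))
    (hX : ∀ j < 5, ∀ᶠ n in atTop, 4 * X j n ^ 2 + 3 ≤ X (j + 1) n) (H : Carries (X 0) m) :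
    Carries (X 5) fun n => 31 * m n + ℓ n := by
  intro c f hf
  obtain ⟨σ, hσ, hσ'⟩ := exists_partrec_identifies hξ
  have hlevel := H.iterate_double hX hm
  have hX' : ∀ᶠ n in atTop, ∀ j < 5, 4 * X j n ^ 2 + 3 ≤ X (j + 1) n :=
    (eventually_all_finite (Set.finite_lt_nat 5)).2 hX
  filter_upwards [(hlevel 0 (by omega)).exists_tag, (hlevel 1 (by omega)).exists_ask hσ hb' hℓ,
    (hlevel 2 (by omega)).exists_init, (hlevel 3 (by omega)).exists_rounds hσ hb' hℓ,
    (hlevel 4 (by omega)).exists_output hσ c hf hm hb' hℓ, hb, hℓ', hcap, hX']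
    with n ex₀ ex₁ ex₂ ex₃ ex₄ hbn hℓn hcapn hXn a ha i hi
  obtain ⟨w, hw, hσw⟩ := hσ' (b n, ℓ n) (hbn ▸ exists_identifies_of_le_capacity hℓn hcapn)
  obtain ⟨j, hj, i₀, hi₀, i₁, hi₁, i₂, hi₂, i₃, hi₃, i₄, hi₄, rfl⟩ := exists_glue_five_eq hi
  obtain ⟨Q, -, hQ, hrun⟩ := hw j hj
  obtain ⟨u, hu, hposition⟩ := Option.map_eq_some_iff.1 hrun
  obtain ⟨h₀, hlt₀, H₀⟩ := ex₀ i₀ (by simpa using hi₀)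
  obtain ⟨h₁, hlt₁, H₁⟩ := ex₁ w hσw i₁ hi₁
  obtain ⟨h₂, hlt₂, H₂⟩ := ex₂ i₂ hi₂
  obtain ⟨h₃, hlt₃, H₃⟩ := ex₃ w hσw i₃ hi₃
  obtain ⟨h₄, hlt₄, H₄⟩ := ex₄ w hσw a ha i₄ hi₄
  refine ⟨runner Q h₀ h₁ h₂ h₃ h₄,
    encode_runner_lt (X := (X · n)) hXn (hbn ▸ hQ) hlt₀ hlt₁ hlt₂ hlt₃ hlt₄, fun z => ?_⟩
  obtain ⟨l, v, rfl, heval⟩ := exists_eval_runner H₀ H₁ (H₂ (i₃, z)) (H₃ z) hu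
  rw [heval, H₄, Strategy.output, ← hposition]
  rfl

/-! ### Iterating the amplification step -/

lemma eventually_pow_lt_two_pow_div {c : ℕ} (hc : 0 < c) (D : ℕ) :
    ∀ᶠ n : ℕ in atTop, n ^ D < 2 ^ (n / c) := by
  have hlim := tendsto_pow_const_div_const_pow_of_one_lt D (r := (2 : ℝ)) (by norm_num)
  have hpos : (0 : ℝ) < 1 / ((2 * c : ℕ) : ℝ) ^ D := by positivity
  have hquot : ∀ᶠ t : ℕ in atTop, (2 * c * t) ^ D < 2 ^ t := by
    filter_upwards [hlim.eventually (gt_mem_nhds hpos)] with t ht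
    rw [div_lt_div_iff₀ (by positivity) (by positivity), one_mul, ← mul_pow] at ht
    rw [mul_comm]
    exact_mod_cast ht
  filter_upwards [(Nat.tendsto_div_const_atTop hc.ne').eventually hquot, eventually_ge_atTop c]
    with n hn hcn
  refine (Nat.pow_le_pow_left ?_ D).trans_lt hn
  have hone : 1 ≤ n / c := (Nat.one_le_div_iff hc).2 hcn
  calc n = c * (n / c) + n % c := (Nat.div_add_mod n c).symm
    _ ≤ c * (n / c) + c * (n / c) := by gcongr; nlinarith [Nat.mod_lt n hc]
    _ = 2 * c * (n / c) := by ring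

lemma PolyBounded.eventually_mul_size_le {f : ℕ → ℕ} (hf : PolyBounded f) (c : ℕ) :
    ∀ᶠ n in atTop, c * Nat.size (f n) ≤ n := by
  obtain ⟨D, hD⟩ := hf
  filter_upwards [hD, eventually_pow_lt_two_pow_div c.succ_pos D] with n hfn hpow
  calc c * Nat.size (f n) ≤ (c + 1) * (n / (c + 1)) :=
        Nat.mul_le_mul c.le_succ (Nat.size_le.2 (hfn.trans_lt hpow))
    _ ≤ n := Nat.mul_div_le _ _

lemma PolyBounded.eventually_size_le {f : ℕ → ℕ} (hf : PolyBounded f) {ε : ℝ} (hε : 0 < ε) :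
    ∀ᶠ n in atTop, (Nat.size (f n) : ℝ) ≤ ε * n := by
  obtain ⟨c, hc⟩ := exists_nat_gt (1 / ε)
  filter_upwards [hf.eventually_mul_size_le c] with n hn
  have hn' : (c : ℝ) * Nat.size (f n) ≤ n := by exact_mod_cast hn
  calc (Nat.size (f n) : ℝ) = ε * (1 / ε * Nat.size (f n)) := by field_simp
    _ ≤ ε * (c * Nat.size (f n)) := by gcongr
    _ ≤ ε * n := by gcongr

lemma log_capacity_le {V Y : ℕ} (hY : Y ≤ 4 * (V + 1) ^ 2 + 3) :
    Nat.log 2 (capacity Y) ≤ 2 * Nat.log 2 (capacity V) + Nat.size (28 * Nat.size Y) := by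
  have hV : capacity (V + 1) ≤ 2 ^ (Nat.log 2 (capacity V) + 1) :=
    (capacity_succ_le V).trans (Nat.lt_pow_succ_log_self (by norm_num) _)
  have hbound : capacity Y ≤ 2 ^ (2 * Nat.log 2 (capacity V) + Nat.size (28 * Nat.size Y)) :=
    calc capacity Y ≤ Nat.size Y * (7 * (2 ^ (Nat.log 2 (capacity V) + 1)) ^ 2) :=
          (capacity_le_size_mul_capacity_sq V.succ_pos hY).trans (by gcongr)
      _ = 2 ^ (2 * Nat.log 2 (capacity V)) * (28 * Nat.size Y) := by rw [pow_succ, pow_mul']; ring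
      _ ≤ 2 ^ (2 * Nat.log 2 (capacity V) + Nat.size (28 * Nat.size Y)) := by
        rw [pow_add]
        exact Nat.mul_le_mul_left _ (Nat.lt_size_self _).le
  simpa using Nat.log_mono_right (b := 2) hbound

/-- The bound on the encodings of `k`-fold components of a code below `2 ^ s`. -/
def level : ℕ → ℕ → ℕ
  | 0, s => 2 ^ s
  | k + 1, s => Nat.sqrt ((level k s - 3) / 4)

lemma primrec_level (k : ℕ) : Primrec (level k) := by
  induction k with
  | zero => exact primrec_two_pow
  | succ k ih =>
    exact Primrec.nat_sqrt.comp (Primrec.nat_div.comp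
      (Primrec.nat_sub.comp ih (Primrec.const 3)) (Primrec.const 4))

lemma four_mul_level_sq_le {k s : ℕ} (h : 3 ≤ level k s) :
    4 * level (k + 1) s ^ 2 + 3 ≤ level k s := by
  have hsqrt : level (k + 1) s ^ 2 ≤ (level k s - 3) / 4 := Nat.sqrt_le' _
  omega

lemma level_le_four_mul_sq (k s : ℕ) : level k s ≤ 4 * (level (k + 1) s + 1) ^ 2 + 3 := by
  have hsqrt : (level k s - 3) / 4 < (level (k + 1) s + 1) ^ 2 := Nat.lt_succ_sqrt' _
  omega

lemma level_le (k s : ℕ) : level k s ≤ 2 ^ s := by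
  induction k with
  | zero => exact le_rfl
  | succ k ih =>
    have hsqrt : level (k + 1) s ≤ (level k s - 3) / 4 := Nat.sqrt_le_self _
    omega

/-- Size parameters that are polynomially bounded, but so large that codes of length `2 * s n + 2`
can be separated in `2 ^ n` ways. -/
structure Admissible (s : ℕ → ℕ) : Prop where
  poly : PolyBounded s
  large : ∀ᶠ n in atTop, 2 ^ n ≤ capacity (2 ^ (2 * s n + 2))

/-- The number of bits in which codes below `level k (s n)` can be separated. -/
noncomputable def bits (s : ℕ → ℕ) (k n : ℕ) : ℕ := Nat.log 2 (capacity (level k (s n)))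

/-- The number of bits that codes below `level k (s n)` carry after `R` amplification steps. -/
noncomputable def carried (s : ℕ → ℕ) : ℕ → ℕ → ℕ → ℕ
  | 0, _, _ => 0
  | R + 1, k, n => 31 * carried s R (k + 5) n + bits s (k + 5) n

/-- A bound for the factor in `capacity_le_size_mul_capacity_sq`, in bits, at all levels. -/
def loss (s : ℕ → ℕ) (n : ℕ) : ℕ := Nat.size (28 * (2 * s n + 3))

section

variable {s : ℕ → ℕ}

lemma bits_le (k n : ℕ) : bits s k n ≤ s n := by
  have h := Nat.log_mono_right (b := 2) ((capacity_le _).trans (level_le k (s n)))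
  rwa [Nat.log_pow (by norm_num)] at h

lemma bits_le_two_mul_bits_succ_add (k n : ℕ) : bits s k n ≤ 2 * bits s (k + 1) n + loss s n := by
  refine (log_capacity_le (level_le_four_mul_sq k (s n))).trans (Nat.add_le_add_left ?_ _)
  have hsize : Nat.size (level k (s n)) ≤ s n + 1 :=
    (Nat.size_le_size (level_le k (s n))).trans Nat.size_pow.le
  exact Nat.size_le_size (by omega)

lemma le_bits_zero {n : ℕ} (h : 2 ^ n ≤ capacity (2 ^ (2 * s n + 2))) :
    n ≤ 2 * bits s 0 n + loss s n := by
  have hV : 2 ^ (2 * s n + 2) ≤ 4 * (2 ^ s n + 1) ^ 2 + 3 := by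
    rw [pow_add, pow_mul']
    nlinarith [Nat.zero_le (2 ^ s n)]
  calc n = Nat.log 2 (2 ^ n) := (Nat.log_pow (by norm_num) n).symm
    _ ≤ Nat.log 2 (capacity (2 ^ (2 * s n + 2))) := Nat.log_mono_right h
    _ ≤ 2 * bits s 0 n + Nat.size (28 * Nat.size (2 ^ (2 * s n + 2))) := log_capacity_le hV
    _ = 2 * bits s 0 n + loss s n := by rw [Nat.size_pow, loss]

lemma two_pow_bits_le {k n : ℕ} (h : 0 < level k (s n)) :
    2 ^ bits s k n ≤ capacity (level k (s n)) :=
  Nat.pow_log_le_self 2 (capacity_pos h).ne'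

namespace Admissible

variable (hs : Admissible s)

include hs

lemma polyBounded_bits (k : ℕ) : PolyBounded (bits s k) :=
  hs.poly.mono (Eventually.of_forall fun n => bits_le k n)

lemma polyBounded_carried (R k : ℕ) : PolyBounded (carried s R k) := by
  induction R generalizing k with
  | zero => exact PolyBounded.const 0
  | succ R ih => exact ((PolyBounded.const 31).mul (ih (k + 5))).add (hs.polyBounded_bits (k + 5))

lemma loss_le {ε : ℝ} (hε : 0 < ε) : ∀ᶠ n in atTop, (loss s n : ℝ) ≤ ε * n :=
  ((PolyBounded.const 28).mul (((PolyBounded.const 2).mul hs.poly).add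
    (PolyBounded.const 3))).eventually_size_le hε

lemma div_four_le : ∀ᶠ n in atTop, n / 4 ≤ s n := by
  filter_upwards [hs.large] with n h
  have := (Nat.pow_le_pow_iff_right (by norm_num)).1 (h.trans (capacity_le _))
  omega

lemma pow_le_level (k D : ℕ) : ∀ᶠ n in atTop, n ^ D ≤ level k (s n) := by
  induction k generalizing D with
  | zero =>
    filter_upwards [hs.div_four_le, eventually_pow_lt_two_pow_div four_pos D] with n hn hpow
    exact hpow.le.trans (Nat.pow_le_pow_right (by norm_num) hn)
  | succ k ih =>
    filter_upwards [ih (2 * D + 3), eventually_ge_atTop 2] with n hlevel hn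
    refine Nat.le_sqrt'.2 ((Nat.le_div_iff_mul_le (by norm_num)).2 ?_)
    have hcube : 2 ^ 3 ≤ n ^ 3 := Nat.pow_le_pow_left hn 3
    have hone : 1 ≤ (n ^ D) ^ 2 := Nat.one_le_pow _ _ (Nat.pow_pos (by omega))
    have hsplit : n ^ (2 * D + 3) = (n ^ D) ^ 2 * n ^ 3 := by rw [pow_add, pow_mul']
    have hmul : (n ^ D) ^ 2 * 2 ^ 3 ≤ (n ^ D) ^ 2 * n ^ 3 := Nat.mul_le_mul_left _ hcube
    omega

lemma le_level (k c : ℕ) : ∀ᶠ n in atTop, c ≤ level k (s n) := by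
  filter_upwards [hs.pow_le_level k 1, eventually_ge_atTop c] with n hlevel hn
  exact hn.trans (by simpa only [pow_one] using hlevel)

lemma le_bits (k : ℕ) {ε : ℝ} (hε : 0 < ε) :
    ∀ᶠ n in atTop, (1 - ε) * n ≤ 2 ^ (k + 1) * bits s k n := by
  induction k generalizing ε with
  | zero =>
    filter_upwards [hs.large, hs.loss_le hε] with n hlarge hloss
    have hbits : (n : ℝ) ≤ 2 * bits s 0 n + loss s n := by exact_mod_cast le_bits_zero hlarge
    rw [zero_add, pow_one]
    linarith
  | succ k ih =>
    filter_upwards [ih (half_pos hε), hs.loss_le (ε := ε / 2 / 2 ^ (k + 1)) (by positivity)]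
      with n hbits hloss
    rw [div_mul_eq_mul_div, le_div_iff₀' (by positivity)] at hloss
    have hsucc : (bits s k n : ℝ) ≤ 2 * bits s (k + 1) n + loss s n := by
      exact_mod_cast bits_le_two_mul_bits_succ_add k n
    calc (1 - ε) * n = (1 - ε / 2) * n - ε / 2 * n := by ring
      _ ≤ 2 ^ (k + 1) * bits s k n - 2 ^ (k + 1) * loss s n := sub_le_sub hbits hloss
      _ ≤ 2 ^ (k + 1) * (2 * bits s (k + 1) n + loss s n) - 2 ^ (k + 1) * loss s n := by gcongr
      _ = 2 ^ (k + 1 + 1) * bits s (k + 1) n := by ring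

lemma one_le_bits (k : ℕ) : ∀ᶠ n in atTop, 1 ≤ bits s k n := by
  filter_upwards [hs.le_bits k (ε := 1 / 2) (by norm_num), eventually_ge_atTop 1] with n hbits hn
  refine Nat.one_le_iff_ne_zero.2 fun hzero => ?_
  have hn' : (1 : ℝ) ≤ n := by exact_mod_cast hn
  rw [hzero, Nat.cast_zero, mul_zero] at hbits
  linarith

lemma carries (R k : ℕ) : Carries (fun n => level k (s n)) (carried s R k) := by
  induction R generalizing k with
  | zero =>
    refine carries_zero fun f ⟨C, hC⟩ => ?_
    filter_upwards [hC, hs.pow_le_level k C] with n using le_trans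
  | succ R ih =>
    refine Carries.step (X := fun j n => level (k + 5 - j) (s n)) (primrec_level (k + 5))
      (Eventually.of_forall fun n => rfl) hs.poly (hs.polyBounded_carried R (k + 5))
      (hs.polyBounded_bits (k + 5)) (hs.one_le_bits (k + 5)) ?_ (fun j hj => ?_) (ih (k + 5))
    · filter_upwards [hs.le_level (k + 5) 1] with n hn using two_pow_bits_le hn
    · rw [show k + 5 - j = k + 5 - (j + 1) + 1 by omega]
      filter_upwards [hs.le_level (k + 5 - (j + 1)) 3] with n hn using four_mul_level_sq_le hn

-- An amplification step splits off the fraction `1 / 32` of the bits that are still missing.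
lemma le_carried (R k : ℕ) {ε : ℝ} (hε : 0 < ε) :
    ∀ᶠ n in atTop, (1 - (31 / 32) ^ R - ε) * n ≤ 2 ^ (k + 1) * carried s R k n := by
  induction R generalizing k with
  | zero =>
    refine Eventually.of_forall fun n => ?_
    have : 0 ≤ ε * n := by positivity
    simpa [carried] using this
  | succ R ih =>
    filter_upwards [ih (k + 5), hs.le_bits (k + 5) hε] with n hcarried hbits
    calc (1 - (31 / 32) ^ (R + 1) - ε) * n
        = 31 / 32 * ((1 - (31 / 32) ^ R - ε) * n) + 1 / 32 * ((1 - ε) * n) := by ring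
      _ ≤ 31 / 32 * (2 ^ (k + 5 + 1) * carried s R (k + 5) n) +
          1 / 32 * (2 ^ (k + 5 + 1) * bits s (k + 5) n) := by gcongr
      _ = 2 ^ (k + 1) * carried s (R + 1) k n := by rw [carried]; push_cast; ring

lemma exists_carries {β : ℝ} (hβ : β < 1) : ∃ m : ℕ → ℕ,
    Carries (fun n => 2 ^ s n) m ∧ ∀ᶠ n in atTop, β * n < 2 * m n := by
  obtain ⟨R, hR⟩ := exists_pow_lt_of_lt_one (show 0 < (1 - β) / 2 by linarith)
    (show (31 / 32 : ℝ) < 1 by norm_num)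
  refine ⟨_, hs.carries R 0, ?_⟩
  filter_upwards [hs.le_carried R 0 (ε := (1 - β) / 2) (by linarith), eventually_gt_atTop 0]
    with n hcarried hn
  rw [zero_add, pow_one] at hcarried
  refine lt_of_lt_of_le ?_ hcarried
  gcongr
  linarith

end Admissible

end

/-! ### Waiting for all short programs to halt -/

open Classical in
/-- The normal forms of those codes with number below `X` that halt. -/
noncomputable def haltingForms (X : ℕ) : Finset Code := (forms X).filter fun d => (d.eval 0).Dom

open Classical in
/-- The normal forms of codes with number below `X` all of whose preimages below `X` have halted by
time `t`. -/
noncomputable def haltedForms (X t : ℕ) : Finset Code :=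
  (forms X).filter fun d => ∀ c ∈ codesBelow X, nf c = d → (Code.evaln t c 0).isSome

lemma mem_haltingForms {X : ℕ} {d : Code} :
    d ∈ haltingForms X ↔ d ∈ forms X ∧ (d.eval 0).Dom := by
  classical exact Finset.mem_filter

lemma mem_haltedForms {X t : ℕ} {d : Code} : d ∈ haltedForms X t ↔
    d ∈ forms X ∧ ∀ c ∈ codesBelow X, nf c = d → (Code.evaln t c 0).isSome := by
  classical exact Finset.mem_filter

lemma haltedForms_subset (X t : ℕ) : haltedForms X t ⊆ haltingForms X := fun d hd => by
  obtain ⟨hform, hhalt⟩ := mem_haltedForms.1 hd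
  obtain ⟨c, hc, rfl⟩ := mem_forms.1 hform
  obtain ⟨v, hv⟩ := Option.isSome_iff_exists.1 (hhalt c (mem_codesBelow.2 hc) rfl)
  refine mem_haltingForms.2 ⟨hform, ?_⟩
  rw [eval_nf]
  exact Part.dom_iff_mem.2 ⟨v, Code.evaln_sound hv⟩

lemma isSome_evaln_of_card_haltingForms_le {X t : ℕ}
    (h : (haltingForms X).card ≤ (haltedForms X t).card) {c : Code} (hc : encode c < X)
    (hdom : (c.eval 0).Dom) : (Code.evaln t c 0).isSome := by
  have hmem : nf c ∈ haltingForms X :=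
    mem_haltingForms.2 ⟨nf_mem_forms hc, (congrFun (eval_nf c) 0).symm ▸ hdom⟩
  rw [← Finset.eq_of_subset_of_card_le (haltedForms_subset X t) h] at hmem
  exact (mem_haltedForms.1 hmem).2 c (mem_codesBelow.2 hc) rfl

lemma exists_card_haltingForms_le (X : ℕ) :
    ∃ t, (haltingForms X).card ≤ (haltedForms X t).card := by
  have hhalt : ∀ᶠ t in atTop, ∀ c ∈ codesBelow X, (c.eval 0).Dom → (Code.evaln t c 0).isSome :=
    (eventually_all_finset _).2 fun c _ => by
      by_cases hdom : (c.eval 0).Dom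
      · filter_upwards [eventually_evaln_eq (Part.some_get hdom).symm] with t ht _
        rw [ht, Option.isSome_some]
      · exact Eventually.of_forall fun t h => absurd h hdom
  obtain ⟨t, ht⟩ := hhalt.exists
  refine ⟨t, Finset.card_le_card fun d hd => ?_⟩
  obtain ⟨hform, hdom⟩ := mem_haltingForms.1 hd
  refine mem_haltedForms.2 ⟨hform, fun c hc hcd => ht c hc ?_⟩
  rwa [← eval_nf, hcd]

section

variable {β : Type} [Primcodable β] {R : Code → β → Prop}

lemma primrecRel_forall_mem_codesBelow (hR : PrimrecRel R) :
    PrimrecRel fun (X : ℕ) (b : β) => ∀ c ∈ codesBelow X, R c b := by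
  have hnum : PrimrecRel fun (j : ℕ) (b : β) => R (ofNat Code j) b :=
    hR.comp ((Primrec.ofNat Code).comp Primrec.fst) Primrec.snd
  refine (hnum.forall_mem_list.comp (Primrec.list_range.comp Primrec.fst) Primrec.snd).of_eq
    fun p => ?_
  simp only [codesBelow, Finset.forall_mem_image, Finset.mem_range, List.mem_range]

lemma primrecRel_exists_mem_codesBelow (hR : PrimrecRel R) :
    PrimrecRel fun (X : ℕ) (b : β) => ∃ c ∈ codesBelow X, R c b :=
  (primrecRel_forall_mem_codesBelow hR.not).not.of_eq fun X b => by push Not; rfl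

end

lemma primrecRel_mem_haltedForms :
    PrimrecRel fun (d : Code) (p : ℕ × ℕ) => d ∈ haltedForms p.1 p.2 := by
  have hnf : PrimrecRel fun (c : Code) (q : Code × ℕ) => nf c = q.1 :=
    Primrec.eq.comp (primrec_nf.comp Primrec.fst) (Primrec.fst.comp Primrec.snd)
  have hhalt : PrimrecRel fun (c : Code) (q : Code × ℕ) => (Code.evaln q.2 c 0).isSome = true :=
    Primrec.eq.comp (Primrec.option_isSome.comp (primrec_evaln_comp
      (Primrec.snd.comp Primrec.snd) Primrec.fst (Primrec.const 0))) (Primrec.const true)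
  have himp : PrimrecRel fun (c : Code) (q : Code × ℕ) =>
      nf c = q.1 → (Code.evaln q.2 c 0).isSome = true :=
    (hnf.not.or hhalt).of_eq fun _ => imp_iff_not_or.symm
  have hX : Primrec fun r : Code × ℕ × ℕ => r.2.1 := Primrec.fst.comp Primrec.snd
  have hq : Primrec fun r : Code × ℕ × ℕ => (r.1, r.2.2) :=
    Primrec.fst.pair (Primrec.snd.comp Primrec.snd)
  refine (((primrecRel_exists_mem_codesBelow hnf).comp hX hq).and
    ((primrecRel_forall_mem_codesBelow himp).comp hX hq)).of_eq fun r => ?_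
  simp only [mem_haltedForms, mem_forms, mem_codesBelow]

open Classical in
lemma card_haltedForms_eq (X t : ℕ) : (haltedForms X t).card =
    ((List.range X).filter fun j => ofNat Code j ∈ haltedForms X t).length := by
  have himage : haltedForms X t = (((List.range X).filter fun j =>
      ofNat Code j ∈ haltedForms X t).toFinset.image (ofNat Code)) := by
    ext d
    simp only [Finset.mem_image, List.mem_toFinset, List.mem_filter, List.mem_range,
      decide_eq_true_eq]
    refine ⟨fun hd => ⟨encode d, ⟨?_, by rwa [ofNat_encode]⟩, ofNat_encode d⟩, ?_⟩
    · obtain ⟨c, hc, rfl⟩ := mem_forms.1 (mem_haltedForms.1 hd).1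
      exact (encode_nf_le c).trans_lt hc
    · rintro ⟨j, ⟨-, hj⟩, rfl⟩
      exact hj
  exact (congrArg Finset.card himage).trans ((Finset.card_image_of_injective _
    (eqv Code).symm.injective).trans (List.toFinset_card_of_nodup (List.nodup_range.filter _)))

lemma primrec_card_haltedForms : Primrec₂ fun X t : ℕ => (haltedForms X t).card := by
  classical
  have hmem : PrimrecRel fun (j : ℕ) (p : ℕ × ℕ) => ofNat Code j ∈ haltedForms p.1 p.2 :=
    primrecRel_mem_haltedForms.comp ((Primrec.ofNat Code).comp Primrec.fst) Primrec.snd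
  have hfilter := hmem.listFilter.comp (Primrec.list_range.comp Primrec.fst) Primrec.id
  exact (Primrec.list_length.comp hfilter).of_eq fun p => (card_haltedForms_eq p.1 p.2).symm

/-- With `p = ((n, s), q)` and `w = (t, x)`: by time `t`, the normal forms of at least `q` codes of
length `n / 2` have halted, while the number `x < 2 ^ n` is not yet an output of any code of length
`2 * s`. -/
def IsLate (p : (ℕ × ℕ) × ℕ) (w : ℕ × ℕ) : Prop :=
  p.2 ≤ (haltedForms (2 ^ (p.1.1 / 2)) w.1).card ∧ w.2 < 2 ^ p.1.1 ∧
    ∀ c ∈ codesBelow (2 ^ (2 * p.1.2)), Code.evaln w.1 c 0 ≠ some w.2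

lemma primrecRel_isLate : PrimrecRel IsLate := by
  have hn : Primrec fun r : ((ℕ × ℕ) × ℕ) × ℕ × ℕ => r.1.1.1 :=
    Primrec.fst.comp (Primrec.fst.comp Primrec.fst)
  have hs : Primrec fun r : ((ℕ × ℕ) × ℕ) × ℕ × ℕ => 2 ^ (2 * r.1.1.2) :=
    primrec_two_pow.comp (Primrec.nat_mul.comp (Primrec.const 2)
      (Primrec.snd.comp (Primrec.fst.comp Primrec.fst)))
  have hcard : Primrec fun r : ((ℕ × ℕ) × ℕ) × ℕ × ℕ =>
      (haltedForms (2 ^ (r.1.1.1 / 2)) r.2.1).card :=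
    primrec_card_haltedForms.comp (primrec_two_pow.comp
      (Primrec.nat_div.comp hn (Primrec.const 2))) (Primrec.fst.comp Primrec.snd)
  have hmiss : PrimrecRel fun (c : Code) (w : ℕ × ℕ) => Code.evaln w.1 c 0 ≠ some w.2 :=
    (Primrec.eq.comp (primrec_evaln_comp (Primrec.fst.comp Primrec.snd) Primrec.fst
      (Primrec.const 0)) (Primrec.option_some.comp (Primrec.snd.comp Primrec.snd))).not
  exact (Primrec.nat_le.comp (Primrec.snd.comp Primrec.fst) hcard).and
    ((Primrec.nat_lt.comp (Primrec.snd.comp Primrec.snd) (primrec_two_pow.comp hn)).and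
      ((primrecRel_forall_mem_codesBelow hmiss).comp hs Primrec.snd))

lemma exists_evaln_ne {X N : ℕ} (h : capacity X < N) (t : ℕ) :
    ∃ x < N, ∀ c ∈ codesBelow X, Code.evaln t c 0 ≠ some x := by
  classical
  by_contra! hall
  choose! u hu hux using hall
  have heval : ∀ x ∈ Finset.range N, (u x).eval 0 = Part.some x := fun x hx =>
    Part.eq_some_iff.2 (Code.evaln_sound (hux x (Finset.mem_range.1 hx)))
  have hinj : Set.InjOn u (Finset.range N) := fun x hx y hy hxy =>
    Part.some_injective ((heval x hx).symm.trans (hxy ▸ heval y hy))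
  have hle := (SeqSeparable.image_of_eval Function.injective_id heval).card_le_capacity (X := X)
    (by simpa only [Finset.forall_mem_image, Finset.mem_range, mem_codesBelow] using hu)
  rw [Finset.card_image_of_injOn hinj, Finset.card_range] at hle
  exact hle.not_gt h

lemma exists_admissible :
    ∃ s : ℕ → ℕ, Admissible s ∧ ∀ n, 1 ≤ n → capacity (2 ^ (2 * s n)) < 2 ^ n := by
  classical
  obtain ⟨g, -, hg⟩ := exists_two_pow_le_capacity
  have hlarge : ∀ n, ∃ s, 1 ≤ n → 2 ^ n ≤ capacity (2 ^ (2 * s + 2)) := fun n =>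
    ⟨g * n, fun hn => (hg n hn).trans
      (capacity_mono (Nat.pow_le_pow_right two_pos (by omega)))⟩
  refine ⟨fun n => Nat.find (hlarge n), ⟨?_, ?_⟩, fun n hn => ?_⟩
  · refine ((PolyBounded.const g).mul PolyBounded.id).mono (Eventually.of_forall fun n => ?_)
    exact Nat.find_min' _ fun hn => (hg n hn).trans
      (capacity_mono (Nat.pow_le_pow_right two_pos (by omega)))
  · filter_upwards [eventually_ge_atTop 1] with n hn using Nat.find_spec (hlarge n) hn
  · change capacity (2 ^ (2 * Nat.find (hlarge n))) < 2 ^ n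
    rcases hfind : Nat.find (hlarge n) with - | k
    · exact (capacity_le (2 ^ (2 * 0))).trans_lt (Nat.one_lt_two_pow (by omega))
    · have hmin := Nat.find_min (hlarge n) (m := k) (by omega)
      push Not at hmin
      exact hmin.2

lemma eventually_card_haltingForms_lt : ∃ β < (1 : ℝ), ∀ m : ℕ → ℕ,
    (∀ᶠ n in atTop, β * n < 2 * m n) →
      ∀ᶠ n in atTop, (haltingForms (2 ^ (n / 2))).card < 2 ^ m n := by
  obtain ⟨α, hα, hforms⟩ := exists_card_forms_le_rpow
  refine ⟨α, hα.2, fun m hm => ?_⟩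
  filter_upwards [hm, eventually_ge_atTop 10] with n hmn hn
  have hX : 24 ≤ 2 ^ (n / 2) :=
    le_trans (by norm_num) (Nat.pow_le_pow_right two_pos (show 5 ≤ n / 2 by omega))
  have hexp : ((n / 2 : ℕ) : ℝ) * α < m n := by
    have hhalf : ((n / 2 : ℕ) : ℝ) ≤ n / 2 := Nat.cast_div_le
    nlinarith [hα.1]
  have hlt : ((haltingForms (2 ^ (n / 2))).card : ℝ) < 2 ^ m n := by
    calc ((haltingForms (2 ^ (n / 2))).card : ℝ) ≤ (forms (2 ^ (n / 2))).card := by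
          exact_mod_cast Finset.card_le_card fun d hd => (mem_haltingForms.1 hd).1
      _ ≤ ((2 ^ (n / 2) : ℕ) : ℝ) ^ α := hforms _ hX
      _ = 2 ^ (((n / 2 : ℕ) : ℝ) * α) := by
          rw [Nat.cast_pow, Nat.cast_ofNat, ← Real.rpow_natCast, ← Real.rpow_mul zero_le_two]
      _ < 2 ^ (m n : ℝ) := Real.rpow_lt_rpow_of_exponent_lt one_lt_two hexp
      _ = 2 ^ m n := Real.rpow_natCast 2 (m n)
  exact_mod_cast hlt

-- The number of normal forms of halting codes of length `n / 2` tells when all these codes have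
-- halted, and a code of length `s n` has room for it.
lemma exists_late_output : ∃ s : ℕ → ℕ, ∀ᶠ n in atTop, ∃ t x : ℕ, ∃ h : Code,
    encode h < 2 ^ s n ∧ h.eval 0 = Part.some x ∧ x < 2 ^ n ∧
    (∀ c ∈ codesBelow (2 ^ (2 * s n)), Code.evaln t c 0 ≠ some x) ∧
    ∀ e : Code, encode e < 2 ^ (n / 2) → (e.eval 0).Dom → (Code.evaln t e 0).isSome := by
  obtain ⟨s, hs, hcapacity⟩ := exists_admissible
  obtain ⟨β, hβ, hcard⟩ := eventually_card_haltingForms_lt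
  obtain ⟨m, hm, hmβ⟩ := hs.exists_carries hβ
  obtain ⟨σ, hσ, hσlate⟩ := exists_partrec_search primrecRel_isLate
  have hφ : Partrec fun p : (ℕ × ℕ) × ℕ × ℕ => (σ (p.1, p.2.1)).map Prod.snd :=
    (hσ.comp (Computable.fst.pair (Computable.fst.comp Computable.snd))).map
      (Computable.snd.comp Computable.snd).to₂
  refine ⟨s, ?_⟩
  filter_upwards [hcard m hmβ, hm.exists_code hφ (PolyBounded.id.pair hs.poly),
    eventually_ge_atTop 1] with n hq hcode hn
  obtain ⟨T, hT⟩ := exists_card_haltingForms_le (2 ^ (n / 2))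
  obtain ⟨y, hy, hmiss⟩ := exists_evaln_ne (hcapacity n hn) T
  obtain ⟨⟨t, x⟩, ⟨ht, hx, hlate⟩, hout⟩ := hσlate ((n, s n), (haltingForms (2 ^ (n / 2))).card)
    ⟨(T, y), hT, hy, hmiss⟩
  obtain ⟨h, hh, hheval⟩ := hcode (n, s n) le_rfl _ hq
  refine ⟨t, x, h, hh, (hheval 0).trans ?_, hx, hlate, fun e he hdom =>
    isSome_evaln_of_card_haltingForms_le ht he hdom⟩
  rw [hout, Part.map_some, Part.map_some]
  rfl

/-! ### The halting time of short programs -/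

lemma evaln_eq_some_get {t y : ℕ} {e : Code} (ht : (Code.evaln t e y).isSome)
    (h : (e.eval y).Dom) : Code.evaln t e y = some ((e.eval y).get h) := by
  obtain ⟨v, hv⟩ := Option.isSome_iff_exists.1 ht
  rw [hv, Part.get_eq_of_mem (Code.evaln_sound hv) h]

lemma codeLength_le_iff {c : Code} {ℓ : ℕ} : codeLength c ≤ ℓ ↔ encode c < 2 ^ ℓ := Nat.size_le

lemma K_le {x ℓ : ℕ} {c : Code} (hc : codeLength c ≤ ℓ) (hx : c.eval 0 = Part.some x) :
    K x ≤ ℓ :=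
  Nat.sInf_le ⟨c, hc, hx⟩

lemma exists_codeLength_le_K (x : ℕ) :
    ∃ c : Code, codeLength c ≤ K x ∧ c.eval 0 = Part.some x :=
  Nat.sInf_mem (s := {ℓ : ℕ | ∃ c : Code, codeLength c ≤ ℓ ∧ c.eval 0 = Part.some x})
    ⟨_, Code.const x, le_rfl, Code.eval_const x 0⟩

lemma Kt_le_iff {t x ℓ : ℕ} :
    Kt t x ≤ ℓ ↔ ∃ c : Code, codeLength c ≤ ℓ ∧ Code.evaln t c 0 = some x := by
  refine ⟨fun h => ?_, fun ⟨c, hc, hx⟩ => sInf_le ⟨c, by exact_mod_cast hc, hx⟩⟩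
  rcases Set.eq_empty_or_nonempty
    {ℓ : ℕ∞ | ∃ c : Code, (codeLength c : ℕ∞) ≤ ℓ ∧ Code.evaln t c 0 = some x} with hempty | hne
  · rw [Kt, hempty, sInf_empty] at h
    exact absurd h (ENat.natCast_lt_top ℓ).not_ge
  · obtain ⟨c, hc, hx⟩ := csInf_mem hne
    exact ⟨c, by exact_mod_cast hc.trans h, hx⟩

lemma exists_evaln_Tn' {n x ℓ : ℕ} (hx : x < 2 ^ n) (hℓ : K x ≤ ℓ) :
    ∃ c : Code, codeLength c ≤ 2 * ℓ ∧ Code.evaln (Tn' n) c 0 = some x := by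
  have hne : {T : ℕ | ∀ x < 2 ^ n, Kt T x ≤ 2 * (K x : ℕ∞)}.Nonempty := by
    refine Eventually.exists (f := atTop) ?_
    simp_rw [← Finset.mem_range]
    refine (eventually_all_finset _).2 fun x _ => ?_
    obtain ⟨c, hc, hcx⟩ := exists_codeLength_le_K x
    filter_upwards [eventually_evaln_eq hcx] with T hT
    exact_mod_cast Kt_le_iff.2 ⟨c, hc.trans (Nat.le_mul_of_pos_left _ two_pos), hT⟩
  refine Kt_le_iff.1 ((Nat.sInf_mem hne x hx).trans ?_)
  exact_mod_cast Nat.mul_le_mul_left 2 hℓ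

lemma Tn'_pos (n : ℕ) : 0 < Tn' n := by
  obtain ⟨c, -, hc⟩ := exists_evaln_Tn' (n := n) (x := 0) (by positivity) le_rfl
  refine Nat.pos_of_ne_zero fun h => ?_
  simp [h, Code.evaln] at hc

lemma le_Tn' {n s t x : ℕ} {h : Code} (hh : encode h < 2 ^ s) (hx : h.eval 0 = Part.some x)
    (hxn : x < 2 ^ n) (hlate : ∀ c ∈ codesBelow (2 ^ (2 * s)), Code.evaln t c 0 ≠ some x) :
    t ≤ Tn' n := by
  obtain ⟨c, hc, hcx⟩ := exists_evaln_Tn' hxn (K_le (codeLength_le_iff.2 hh) hx)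
  by_contra! hlt
  exact hlate c (mem_codesBelow.2 (codeLength_le_iff.1 hc)) (Code.evaln_mono hlt.le hcx)

lemma evaln_Tn'_of_codeLength_eq_zero (n : ℕ) {e : Code} (he : codeLength e = 0)
    (h : (e.eval 0).Dom) : Code.evaln (Tn' n) e 0 = some ((e.eval 0).get h) := by
  obtain ⟨k, hk⟩ := Nat.exists_eq_add_one.2 (Tn'_pos n)
  obtain rfl : e = Code.zero := encode_injective (Nat.size_eq_zero.1 he)
  refine evaln_eq_some_get ?_ h
  simp [hk, Code.evaln]

end ShortPrograms

open ShortPrograms in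
theorem short_programs_halt_by_Tn'_general : ∀ᶠ n in Filter.atTop, ∀ e : Code,
    2 * codeLength e ≤ n → ∀ h : (e.eval 0).Dom,
      Code.evaln (Tn' n) e 0 = some ((e.eval 0).get h) := by
  obtain ⟨s, hs⟩ := exists_late_output
  filter_upwards [hs] with n ⟨t, x, h, hh, hx, hxn, hlate, hhalt⟩ e he hdom
  obtain ⟨v, hv⟩ := Option.isSome_iff_exists.1 (hhalt e (codeLength_le_iff.1 (by omega)) hdom)
  exact evaln_eq_some_get (Option.isSome_iff_exists.2
    ⟨v, Code.evaln_mono (le_Tn' hh hx hxn hlate) hv⟩) hdom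

open ShortPrograms in
/-- every program of length at most `n / 2 - O(log n)` that terminates
at all terminates within `Tn' n` steps. -/
theorem short_programs_halt_by_Tn' :
    ∃ c : ℕ, ∀ n : ℕ, ∀ e : Nat.Partrec.Code, 2 * codeLength e + c * Nat.size n ≤ n →
      ∀ h : (e.eval 0).Dom,
        Nat.Partrec.Code.evaln (Tn' n) e 0 = some ((e.eval 0).get h) := by
  obtain ⟨N, hN⟩ := Filter.eventually_atTop.1 short_programs_halt_by_Tn'_general
  refine ⟨N, fun n e hle hdom => ?_⟩
  rcases n.eq_zero_or_pos with rfl | hn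
  · exact evaln_Tn'_of_codeLength_eq_zero 0 (by omega) hdom
  · have hNn : N ≤ N * n.size := Nat.le_mul_of_pos_right N (Nat.size_pos.2 hn)
    exact hN n (by omega) e (by omega) hdom
end

section
/- Soundness of randomized proof strategies (Proposition 1): let L be a first-order language, T a theory, F a sentence, M a structure with M ⊨ T, and fix a proof strategy of depth d given by functions N(h) : ℕ, δ(h) : ℝ≥0 and sentences ψ(h,r) for each history h (a list of previously chosen strings, |h| < d) and each string r of N(h) bits. Assume: (i) along every full path the sum of the thresholds δ is at most ε; (ii) for every history h, the number of strings r of length N(h) with M ⊭ ψ(h,r) is at most δ(h)·2^{N(h)}. Let Γ(h) be the set of sentences accepted along h, and generate a full history by choosing each r uniformly and independently. If the probability that the final history h satisfies 'F is a semantic consequence of T ∪ Γ(h)' is greater than ε, then M ⊨ F. -/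
/-!
This is the union bound in its first-moment form. If `F` fails in the model `M` of `T`, then every
successful run has accepted an axiom that is false in `M`, so it is enough to bound the probability
of accepting a false axiom. Consider the capital, initially `ε`, lowered by `δ h` at each step and
raised by `1` whenever a false axiom is accepted. By the counting hypothesis its average over the
next string never exceeds its current value. At a full history it is nonnegative, and it is at least
`1` if some accepted axiom is false, so its initial value `ε` bounds the probability of that event.
-/

open FirstOrder FirstOrder.Language

/-- A history (list of previously chosen bit-strings) is valid for the strategy if the
string chosen at each step has the bit-length prescribed by the strategy. -/
def ValidHistory (N : List (List Bool) → ℕ) (h : List (List Bool)) : Prop :=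
  ∀ i < h.length, (h.getD i []).length = N (h.take i)

open scoped Classical in
/-- `strategyProb N S d h`: the probability that, continuing from history `h` for `d`
more steps, each step appending a uniformly random string of `N h'` bits to the current
history `h'`, the resulting full history satisfies `S`. -/
noncomputable def strategyProb (N : List (List Bool) → ℕ) (S : List (List Bool) → Prop) :
    ℕ → List (List Bool) → ℝ
  | 0, h => if S h then 1 else 0
  | d + 1, h =>
      (∑ r : Fin (N h) → Bool, strategyProb N S d (h ++ [List.ofFn r])) / 2 ^ (N h)

/-- `accepted ψ h`: the set of sentences accepted along the history `h`, namely the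
candidate axiom `ψ h' r` for each step, where `h'` is the previous history and `r`
the string chosen at that step. -/
def accepted {L : Language} (ψ : List (List Bool) → List Bool → L.Sentence)
    (h : List (List Bool)) : L.Theory :=
  {φ | ∃ i < h.length, φ = ψ (h.take i) (h.getD i [])}

lemma sum_boole_eq_ncard {ι R : Type*} [Fintype ι] [NonAssocSemiring R] (p : ι → Prop)
    [DecidablePred p] : ∑ i, (if p i then (1 : R) else 0) = ({i | p i}.ncard : R) := by
  rw [Finset.sum_boole, Set.ncard_eq_toFinset_card', Set.toFinset_ofPred]

section History

variable {N : List (List Bool) → ℕ} {S S' : List (List Bool) → Prop}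

lemma ValidHistory.nil : ValidHistory N [] := by
  simp [ValidHistory]

lemma ValidHistory.append_singleton {h : List (List Bool)} (hh : ValidHistory N h)
    {r : List Bool} (hr : r.length = N h) : ValidHistory N (h ++ [r]) := by
  intro i hi
  rw [List.length_append, List.length_singleton] at hi
  obtain hi | rfl := Nat.lt_succ_iff_lt_or_eq.1 hi
  · rw [List.take_append_of_le_length hi.le, List.getD_append _ _ _ _ hi]
    exact hh i hi
  · simpa using hr

/-- The sum of the step costs `c h' r` along the history `h`, where `r` is the string chosen after
the earlier history `h'`: the additive potentials on histories. The default value `[]` of `getD` is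
never read. -/
def pathSum {A : Type*} [AddCommMonoid A] (c : List (List Bool) → List Bool → A)
    (h : List (List Bool)) : A :=
  ∑ i ∈ Finset.range h.length, c (h.take i) (h.getD i [])

@[simp]
lemma pathSum_nil {A : Type*} [AddCommMonoid A] (c : List (List Bool) → List Bool → A) :
    pathSum c [] = 0 := by
  simp [pathSum]

lemma pathSum_append_singleton {A : Type*} [AddCommMonoid A]
    (c : List (List Bool) → List Bool → A) (h : List (List Bool)) (r : List Bool) :
    pathSum c (h ++ [r]) = pathSum c h + c h r := by
  have prefix_eq : ∀ i ∈ Finset.range h.length,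
      c ((h ++ [r]).take i) ((h ++ [r]).getD i []) = c (h.take i) (h.getD i []) := by
    intro i hi
    rw [Finset.mem_range] at hi
    rw [List.take_append_of_le_length hi.le, List.getD_append _ _ _ _ hi]
  rw [pathSum, List.length_append, List.length_singleton, Finset.sum_range_succ,
    Finset.sum_congr rfl prefix_eq]
  simp [pathSum]

section Order

variable {A : Type*} [AddCommMonoid A] [PartialOrder A] [IsOrderedAddMonoid A]
  {c : List (List Bool) → List Bool → A}

lemma pathSum_nonneg (hc : ∀ h r, 0 ≤ c h r) (h : List (List Bool)) : 0 ≤ pathSum c h :=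
  Finset.sum_nonneg fun _ _ => hc _ _

lemma step_le_pathSum (hc : ∀ h r, 0 ≤ c h r) {h : List (List Bool)} {i : ℕ}
    (hi : i < h.length) : c (h.take i) (h.getD i []) ≤ pathSum c h :=
  Finset.single_le_sum (f := fun i => c (h.take i) (h.getD i [])) (fun _ _ => hc _ _)
    (Finset.mem_range.2 hi)

end Order

lemma strategyProb_mono (hS : ∀ h, S h → S' h) (n : ℕ) (h : List (List Bool)) :
    strategyProb N S n h ≤ strategyProb N S' n h := by
  induction n generalizing h with
  | zero =>
    simp only [strategyProb]
    split_ifs with hs hs'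
    exacts [le_rfl, absurd (hS h hs) hs', zero_le_one, le_rfl]
  | succ n ih =>
    simp only [strategyProb]
    gcongr
    exact ih _

lemma strategyProb_le_of_supermartingale {d : ℕ} {V : List (List Bool) → ℝ}
    (nonneg : ∀ h, h.length = d → ValidHistory N h → 0 ≤ V h)
    (one_le : ∀ h, h.length = d → ValidHistory N h → S h → 1 ≤ V h)
    (average_le : ∀ h, h.length < d → ValidHistory N h →
      (∑ r : Fin (N h) → Bool, V (h ++ [List.ofFn r])) / 2 ^ N h ≤ V h)
    (n : ℕ) (h : List (List Bool)) (hlen : h.length + n = d) (hh : ValidHistory N h) :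
    strategyProb N S n h ≤ V h := by
  induction n generalizing h with
  | zero =>
    rw [strategyProb]
    split_ifs with hs
    exacts [one_le h hlen hh hs, nonneg h hlen hh]
  | succ n ih =>
    calc strategyProb N S (n + 1) h
        = (∑ r : Fin (N h) → Bool, strategyProb N S n (h ++ [List.ofFn r])) / 2 ^ N h := rfl
      _ ≤ (∑ r : Fin (N h) → Bool, V (h ++ [List.ofFn r])) / 2 ^ N h := by
          gcongr with r
          have hlen' : (h ++ [List.ofFn r]).length + n = d := by
            rw [List.length_append, List.length_singleton]
            omega
          exact ih _ hlen' (hh.append_singleton (by simp))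
      _ ≤ V h := average_le h (by omega) hh

lemma strategyProb_exists_le {bad : List (List Bool) → List Bool → Prop}
    {δ : List (List Bool) → ℝ} {ε : ℝ} {d : ℕ}
    (hsum : ∀ h, h.length = d → ValidHistory N h → ∑ i ∈ Finset.range d, δ (h.take i) ≤ ε)
    (hcount : ∀ h, h.length < d → ValidHistory N h →
      ({r : Fin (N h) → Bool | bad h (List.ofFn r)}.ncard : ℝ) ≤ δ h * 2 ^ N h) :
    strategyProb N (fun h => ∃ i < h.length, bad (h.take i) (h.getD i [])) d [] ≤ ε := by
  classical
  let violations := pathSum fun h r => if bad h r then (1 : ℝ) else 0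
  let spent := pathSum fun h _ => δ h
  have spent_le : ∀ h, h.length = d → ValidHistory N h → spent h ≤ ε := by
    rintro h rfl hh
    exact hsum h rfl hh
  have step_nonneg (h r) : 0 ≤ if bad h r then (1 : ℝ) else 0 := by positivity
  have violations_nonneg (h) : 0 ≤ violations h := pathSum_nonneg step_nonneg h
  have one_le_violations (h) (hbad : ∃ i < h.length, bad (h.take i) (h.getD i [])) :
      1 ≤ violations h := by
    obtain ⟨i, hi, hbad⟩ := hbad
    simpa only [if_pos hbad] using step_le_pathSum step_nonneg hi
  have average_le (h) (hlen : h.length < d) (hh : ValidHistory N h) :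
      (∑ r : Fin (N h) → Bool, (ε - spent (h ++ [List.ofFn r]) +
        violations (h ++ [List.ofFn r]))) / 2 ^ N h ≤ ε - spent h + violations h := by
    simp only [spent, violations, pathSum_append_singleton, Finset.sum_add_distrib,
      sum_boole_eq_ncard, Finset.sum_const, Finset.card_univ, Fintype.card_fun,
      Fintype.card_bool, Fintype.card_fin, nsmul_eq_mul, Nat.cast_pow, Nat.cast_ofNat]
    rw [div_le_iff₀ (by positivity)]
    linarith [hcount h hlen hh]
  simpa [spent, violations] using strategyProb_le_of_supermartingale
    (V := fun h => ε - spent h + violations h)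
    (fun h hlen hh => by linarith [spent_le h hlen hh, violations_nonneg h])
    (fun h hlen hh hbad => by linarith [spent_le h hlen hh, one_le_violations h hbad])
    average_le d [] (by simp) .nil

end History

lemma exists_accepted_not_realized {L : Language} {T : L.Theory} {F : L.Sentence}
    {M : Type*} [L.Structure M] [Nonempty M] (hM : M ⊨ T) (hF : ¬ M ⊨ F)
    {ψ : List (List Bool) → List Bool → L.Sentence} {h : List (List Bool)}
    (hT : (T ∪ accepted ψ h) ⊨ᵇ F) :
    ∃ i < h.length, ¬ M ⊨ ψ (h.take i) (h.getD i []) := by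
  by_contra! hψ
  have accepted_model : M ⊨ accepted ψ h := (Theory.model_iff _).2 <| by
    rintro _ ⟨i, hi, rfl⟩
    exact hψ i hi
  have union_model : M ⊨ T ∪ accepted ψ h := Theory.model_union_iff.2 ⟨hM, accepted_model⟩
  exact hF (hT.realize_sentence M)

/-- soundness of randomized proof strategies, Proposition 1: let `M` be a
model of `T`. If (i) along every valid full history the thresholds `δ` sum to at most
`ε`, and (ii) at each history at most a `δ h` fraction of the `2 ^ (N h)` candidate
axioms are false in `M`, and the probability that a random run of the strategy makes `F`
a semantic consequence of `T` together with the accepted axioms is greater than `ε`,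
then `F` is true in `M`. -/
theorem randomized_proof_soundness {L : Language} (T : L.Theory) (F : L.Sentence)
    (M : Type*) [L.Structure M] [Nonempty M] (hM : M ⊨ T)
    (d : ℕ) (N : List (List Bool) → ℕ) (δ : List (List Bool) → NNReal) (ε : ℝ)
    (ψ : List (List Bool) → List Bool → L.Sentence)
    (hsum : ∀ h : List (List Bool), h.length = d → ValidHistory N h →
      ∑ i ∈ Finset.range d, (δ (h.take i) : ℝ) ≤ ε)
    (hcount : ∀ h : List (List Bool), h.length < d → ValidHistory N h →
      ({r : Fin (N h) → Bool | ¬ M ⊨ ψ h (List.ofFn r)}.ncard : ℝ) ≤ δ h * 2 ^ (N h))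
    (hprob : ε < strategyProb N (fun h => (T ∪ accepted ψ h) ⊨ᵇ F) d []) :
    M ⊨ F := by
  by_contra hF
  refine hprob.not_ge ?_
  calc strategyProb N (fun h => (T ∪ accepted ψ h) ⊨ᵇ F) d []
      ≤ strategyProb N (fun h => ∃ i < h.length, ¬ M ⊨ ψ (h.take i) (h.getD i [])) d [] :=
        strategyProb_mono (fun _ => exists_accepted_not_realized hM hF) d []
    _ ≤ ε := strategyProb_exists_le (bad := fun h r => ¬ M ⊨ ψ h r) hsum hcount
end
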